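/- arXiv:1604.01283 — 4 statements merged into one kernel-verified Lean document; each statement's English description precedes it below -/
import Mathlib

section
/- Let G be a finite group and k a field. Then there exists a positive integer r such that for any two modules M and N over the group algebra kG, if Ext^n_{kG}(M, N) = 0 for r consecutive positive values of n, then Ext^n_{kG}(M, N) = 0 for all n > 0. -/
section SecP1
universe u v

/-- numeric lemma -/
theorem num_lemma (B : ℕ) (n : ℕ) : ∃ r : ℕ, 0 < r ∧ ∀ (j : ℕ) (h : ℕ → ℕ → Prop),
    (∀ m, B < m → h (j + n) m) →
    (∀ i m, i < j + n → 0 < m → h i m → h i (m + 2 * (i + 1) - 1) → h (i + 1) (m + 2 * (i + 1) - 1)) →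
    (∀ i m, i < j + n → 0 < m → h (i + 1) (m + 2 * (i + 1)) → h i m → h i (m + 2 * (i + 1))) →
    (∀ i m, i < j + n → 0 < m → h (i + 1) (m + 2 * (i + 1) - 1) → h i (m + 2 * (i + 1)) → h i m) →
    ∀ a, B < a → (∀ i < r + n * (2 * j), h j (a + i)) → ∀ m, B < m → h j m := by
  induction n with
  | zero => exact ⟨1, one_pos, fun j h h0 _ _ _ a ha _ m hm => h0 m hm⟩
  | succ n ih =>
    obtain ⟨r, hr, ih⟩ := ih
    refine ⟨r + 2 * n + 2, by omega, ?_⟩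
    intro j h h0 ha hb1 hb2 a hBa hcons
    have e : j + 1 + n = j + (n + 1) := by omega
    have key : ∀ m, B < m → h (j + 1) m := by
      apply ih (j + 1) h (by rw [e]; exact h0) (by rw [e]; exact ha) (by rw [e]; exact hb1)
        (by rw [e]; exact hb2) (a + 2 * (j + 1) - 1) (by omega)
      intro i hi
      have e3 : n * (2 * (j + 1)) = n * (2 * j) + 2 * n := by ring
      have e4 : (n + 1) * (2 * j) = n * (2 * j) + 2 * j := by ring
      have := ha j (a + i) (by omega) (by omega) (hcons i (by omega))
        (by
          have := hcons (i + 2 * (j + 1) - 1) (by omega)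
          convert this using 1
          omega)
      convert this using 1
      omega
    have e4 : (n + 1) * (2 * j) = n * (2 * j) + 2 * j := by ring
    have up : ∀ m, B < m → h j m → h j (m + 2 * (j + 1)) := fun m hm hh =>
      hb1 j m (by omega) (by omega) (key _ (by omega)) hh
    have dn : ∀ m, B < m → h j (m + 2 * (j + 1)) → h j m := fun m hm hh =>
      hb2 j m (by omega) (by omega) (key _ (by omega)) hh
    -- all m ≥ a
    have hge : ∀ t, h j (a + t) := by
      intro t
      induction t using Nat.strong_induction_on with
      | _ t iht =>
        by_cases ht : t < 2 * (j + 1)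
        · exact hcons t (by omega)
        · have := up (a + (t - 2 * (j + 1))) (by omega) (iht _ (by omega))
          convert this using 1
          omega
    have hlt : ∀ s m, B < m → a ≤ m + s → h j m := by
      intro s
      induction s with
      | zero => intro m hm hs; have := hge (m - a); convert this using 1; omega
      | succ s ihs =>
        intro m hm hs
        exact dn m hm (ihs _ (by omega) (by omega))
    intro m hm
    exact hlt a m hm (by omega)

structure Pkg (R : Type u) [Ring R] (n B : ℕ) (N : Type v) [AddCommGroup N] [Module R N] where
  J : Type v
  [acg : AddCommGroup J]
  [mod : Module R J]
  d : J →ₗ[R] J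
  Jg : ℕ → Submodule R J
  W : ℕ → ℕ → Submodule R J
  c : ℕ → J →ₗ[R] J
  ν : N →ₗ[R] J
  dd : ∀ u, d (d u) = 0
  d_mem : ∀ m u, u ∈ Jg m → d u ∈ Jg (m + 1)
  c_mem : ∀ j m u, u ∈ Jg m → c j u ∈ Jg (m + 2 * (j + 1))
  cd : ∀ j u, c j (d u) = d (c j u)
  W_zero : ∀ m, W 0 m = ⊥
  W_mono : ∀ j m, W j m ≤ W (j + 1) m
  cW : ∀ j m u, u ∈ Jg m → c j u ∈ W (j + 1) (m + 2 * (j + 1))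
  cWW : ∀ i j m u, u ∈ W j m → c i u ∈ W j (m + 2 * (i + 1))
  dW : ∀ j m u, u ∈ W j m → d u ∈ W j (m + 1)
  reg : ∀ j m u, j < n → u ∈ Jg m → c j u ∈ W j (m + 2 * (j + 1)) → u ∈ W j m
  top : ∀ m, B < m → Jg m ≤ W n m
  lift : ∀ (M : Type v) [AddCommGroup M] [Module R M] (j m : ℕ) (φ : M →ₗ[R] J),
    (∀ x, φ x ∈ W (j + 1) (m + 2 * (j + 1))) →
    ∃ ψ : M →ₗ[R] J, (∀ x, ψ x ∈ Jg m) ∧ ∀ x, φ x - c j (ψ x) ∈ W j (m + 2 * (j + 1))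
  ext : ∀ (X Y : Type v) [AddCommGroup X] [Module R X] [AddCommGroup Y] [Module R Y]
    (i : X →ₗ[R] Y) (_ : Function.Injective i) (m : ℕ) (φ : X →ₗ[R] J), (∀ x, φ x ∈ Jg m) →
    ∃ ψ : Y →ₗ[R] J, (∀ y, ψ y ∈ Jg m) ∧ ψ ∘ₗ i = φ
  exact : ∀ m u, u ∈ Jg (m + 1) → d u = 0 → ∃ w ∈ Jg m, d w = u
  ν_inj : Function.Injective ν
  ν_mem : ∀ x, ν x ∈ Jg 0
  dν : ∀ x, d (ν x) = 0
  exact0 : ∀ u ∈ Jg 0, d u = 0 → ∃ x, ν x = u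

attribute [instance] Pkg.acg Pkg.mod

namespace Pkg
variable {R : Type u} [Ring R] {n B : ℕ} {N : Type v} [AddCommGroup N] [Module R N]
  (K : Pkg.{u, v} R n B N) (M : Type v) [AddCommGroup M] [Module R M]

def h (j m : ℕ) : Prop := ∀ φ : M →ₗ[R] K.J, (∀ x, φ x ∈ K.Jg m) →
  (∀ x, K.d (φ x) ∈ K.W j (m + 1)) →
  ∃ ψ : M →ₗ[R] K.J, (∀ x, ψ x ∈ K.Jg (m - 1)) ∧ ∀ x, φ x - K.d (ψ x) ∈ K.W j m

theorem h_top (m : ℕ) (hm : B < m) : K.h M n m := by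
  intro φ h1 _
  exact ⟨0, fun x => by simp, fun x => by simpa using K.top m hm (h1 x)⟩

theorem mem_cast {f : ℕ → Submodule R K.J} {a b : ℕ} {u : K.J} (hu : u ∈ f a) (e : a = b) :
    u ∈ f b := e ▸ hu

theorem h_a (j m : ℕ) (hj : j < n) (hm : 0 < m) (h1 : K.h M j m)
    (h2 : K.h M j (m + 2 * (j + 1) - 1)) : K.h M (j + 1) (m + 2 * (j + 1) - 1) := by
  intro z hz hdz
  have e1 : m + 2 * (j + 1) - 1 + 1 = m + 2 * (j + 1) := by omega
  rw [e1] at hdz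
  obtain ⟨w, hw, hw'⟩ := K.lift M j m (K.d ∘ₗ z) hdz
  obtain ⟨y, hy, hy'⟩ := h1 w hw (fun x => by
    apply K.reg j _ _ hj (K.d_mem _ _ (hw x))
    have := K.dW _ _ _ (hw' x)
    rw [map_sub, LinearMap.comp_apply, K.dd, zero_sub, neg_mem_iff, ← K.cd] at this
    exact K.mem_cast this (by omega))
  obtain ⟨t, ht, ht'⟩ := h2 (z - K.c j ∘ₗ y) (fun x => by
      exact sub_mem (hz x) (K.mem_cast (K.c_mem j _ _ (hy x)) (by omega)))
    (fun x => by
      rw [e1]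
      have a1 := K.cWW j _ _ _ (hy' x)
      have a2 := add_mem (hw' x) a1
      convert a2 using 1
      simp [K.cd])
  refine ⟨t, ht, fun x => ?_⟩
  have b1 := K.W_mono _ _ (ht' x)
  have b2 := K.mem_cast (K.cW j _ _ (hy x)) (show m - 1 + 2 * (j + 1) = m + 2 * (j + 1) - 1 by omega)
  convert add_mem b1 b2 using 1
  simp
  abel

theorem h_b1 (j m : ℕ) (hj : j < n) (hm : 0 < m) (h1 : K.h M (j + 1) (m + 2 * (j + 1)))
    (h2 : K.h M j m) : K.h M j (m + 2 * (j + 1)) := by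
  intro z hz hdz
  obtain ⟨s, hs, hs'⟩ := h1 z hz (fun x => K.W_mono _ _ (hdz x))
  obtain ⟨w, hw, hw'⟩ := K.lift M j m (z - K.d ∘ₗ s) hs'
  obtain ⟨y, hy, hy'⟩ := h2 w hw (fun x => by
    apply K.reg j _ _ hj (K.d_mem _ _ (hw x))
    have := sub_mem (hdz x) (K.dW _ _ _ (hw' x))
    refine K.mem_cast (a := m + 2 * (j + 1) + 1) ?_ (by omega)
    convert this using 1
    simp [K.cd, K.dd])
  refine ⟨s + K.c j ∘ₗ y, fun x => add_mem (hs x)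
    (K.mem_cast (K.c_mem j _ _ (hy x)) (by omega)), fun x => ?_⟩
  have := add_mem (hw' x) (K.cWW j _ _ _ (hy' x))
  convert this using 1
  simp [K.cd]
  abel

theorem h_b2 (j m : ℕ) (hj : j < n) (hm : 0 < m) (h1 : K.h M (j + 1) (m + 2 * (j + 1) - 1))
    (h2 : K.h M j (m + 2 * (j + 1))) : K.h M j m := by
  intro z hz hdz
  obtain ⟨y, hy, hy'⟩ := h2 (K.c j ∘ₗ z) (fun x => K.c_mem j _ _ (hz x)) (fun x => by
    have := K.cWW j _ _ _ (hdz x)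
    rw [LinearMap.comp_apply, ← K.cd]
    exact K.mem_cast this (by omega))
  have e1 : m + 2 * (j + 1) - 1 + 1 = m + 2 * (j + 1) := by omega
  have e2 : m - 1 + 2 * (j + 1) = m + 2 * (j + 1) - 1 := by omega
  obtain ⟨s, hs, hs'⟩ := h1 y hy (fun x => by
    rw [e1]
    have := sub_mem (K.cW j _ _ (hz x)) (K.W_mono _ _ (hy' x))
    convert this using 1
    simp)
  obtain ⟨w, hw, hw'⟩ := K.lift M j (m - 1) (y - K.d ∘ₗ s) (fun x => by rw [e2]; exact hs' x)
  refine ⟨w, hw, fun x => ?_⟩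
  have hm1 : m - 1 + 1 = m := by omega
  apply K.reg j _ _ hj (sub_mem (hz x) (K.mem_cast (K.d_mem _ _ (hw x)) hm1))
  have a1 := K.mem_cast (K.dW _ _ _ (hw' x)) (show _ = m + 2 * (j + 1) by omega)
  convert add_mem (hy' x) a1 using 1
  simp [K.cd, K.dd]

end Pkg

theorem pkg_main (R : Type u) [Ring R] (n B : ℕ) : ∃ r : ℕ, 0 < r ∧
    ∀ (N : Type v) [AddCommGroup N] [Module R N] (K : Pkg.{u, v} R n B N)
      (M : Type v) [AddCommGroup M] [Module R M],
    ∀ a, B < a → (∀ i < r, K.h M 0 (a + i)) → ∀ m, B < m → K.h M 0 m := by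
  obtain ⟨r, hr, H⟩ := num_lemma B n
  refine ⟨r, hr, ?_⟩
  intro N _ _ K M _ _ a ha hc
  refine H 0 (K.h M) ?_ ?_ ?_ ?_ a ha (by simpa using hc)
  · intro m hm; rw [zero_add]; exact K.h_top M m hm
  · intro i m hi; exact K.h_a M i m (by omega)
  · intro i m hi; exact K.h_b1 M i m (by omega)
  · intro i m hi; exact K.h_b2 M i m (by omega)

/-- Resolution data -/
structure Resl (R : Type u) [Ring R] where
  M : Type v
  P : ℕ → Type v
  [acgM : AddCommGroup M]
  [modM : Module R M]
  [acg : ∀ n, AddCommGroup (P n)]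
  [mod : ∀ n, Module R (P n)]
  proj : ∀ n, Module.Projective R (P n)
  d : ∀ n, P (n + 1) →ₗ[R] P n
  ε : P 0 →ₗ[R] M
  surj : Function.Surjective ε
  ex0 : LinearMap.ker ε = LinearMap.range (d 0)
  ex : ∀ n, LinearMap.ker (d n) = LinearMap.range (d (n + 1))

attribute [instance] Resl.acgM Resl.modM Resl.acg Resl.mod

namespace Resl
variable {R : Type u} [Ring R] {n B : ℕ} {N : Type v} [AddCommGroup N] [Module R N]
  (K : Pkg.{u, v} R n B N) (Q : Resl.{u, v} R)

theorem dd (a : ℕ) (x) : Q.d a (Q.d (a + 1) x) = 0 := by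
  have : Q.d (a + 1) x ∈ LinearMap.ker (Q.d a) := by rw [Q.ex]; exact ⟨x, rfl⟩
  exact this

/-- Vanishing of the cohomology of `Hom(P, N)` in degree `a+1`. -/
def E (N : Type v) [AddCommGroup N] [Module R N] (a : ℕ) : Prop :=
  ∀ f : Q.P (a + 1) →ₗ[R] N, f ∘ₗ Q.d (a + 1) = 0 → ∃ g : Q.P a →ₗ[R] N, g ∘ₗ Q.d a = f

def cyc (a b : ℕ) (f : Q.P a →ₗ[R] K.J) : Prop :=
  (∀ x, f x ∈ K.Jg b) ∧ (∀ x, K.d (f x) = 0) ∧ f ∘ₗ Q.d a = 0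

def V (a b : ℕ) : Prop := ∀ f, Q.cyc K (a + 1) b f →
  ∃ g : Q.P a →ₗ[R] K.J, (∀ x, g x ∈ K.Jg b) ∧ (∀ x, K.d (g x) = 0) ∧ g ∘ₗ Q.d a = f

def V' (a b : ℕ) : Prop := ∀ f, Q.cyc K a (b + 1) f →
  ∃ g : Q.P a →ₗ[R] K.J, (∀ x, g x ∈ K.Jg b) ∧ g ∘ₗ Q.d a = 0 ∧ ∀ x, K.d (g x) = f x

theorem plift (a b : ℕ) (f : Q.P a →ₗ[R] K.J) (hf : ∀ x, f x ∈ K.Jg (b + 1))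
    (hd : ∀ x, K.d (f x) = 0) :
    ∃ g : Q.P a →ₗ[R] K.J, (∀ x, g x ∈ K.Jg b) ∧ ∀ x, K.d (g x) = f x := by
  have := Q.proj a
  let Z : Submodule R K.J := K.Jg (b + 1) ⊓ LinearMap.ker K.d
  let D : K.Jg b →ₗ[R] Z := (K.d ∘ₗ (K.Jg b).subtype).codRestrict Z
    (fun x => ⟨K.d_mem _ _ x.2, K.dd _⟩)
  have hD : Function.Surjective D := by
    rintro ⟨u, hu, hu'⟩
    obtain ⟨w, hw, hw'⟩ := K.exact b u hu hu'
    exact ⟨⟨w, hw⟩, Subtype.ext hw'⟩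
  obtain ⟨g, hg⟩ := Module.projective_lifting_property D (f.codRestrict Z fun x => ⟨hf x, hd x⟩) hD
  refine ⟨(K.Jg b).subtype ∘ₗ g, fun x => (g x).2, fun x => ?_⟩
  have := congrArg Subtype.val (LinearMap.congr_fun hg x)
  exact this

theorem jext (a b : ℕ) (f : Q.P (a + 1) →ₗ[R] K.J) (hf : ∀ x, f x ∈ K.Jg b)
    (hd : f ∘ₗ Q.d (a + 1) = 0) :
    ∃ g : Q.P a →ₗ[R] K.J, (∀ x, g x ∈ K.Jg b) ∧ g ∘ₗ Q.d a = f := by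
  have hk : LinearMap.ker (Q.d a) ≤ LinearMap.ker f := by
    rw [Q.ex]; rintro _ ⟨x, rfl⟩; exact LinearMap.congr_fun hd x
  let f' := (LinearMap.ker (Q.d a)).liftQ f hk
  let i := (LinearMap.ker (Q.d a)).liftQ (Q.d a) le_rfl
  have hi : Function.Injective i := by
    rw [← LinearMap.ker_eq_bot]; exact Submodule.ker_liftQ_eq_bot _ _ _ le_rfl
  obtain ⟨g, hg, hg'⟩ := K.ext _ _ i hi b f' (fun x => by
    obtain ⟨y, rfl⟩ := Submodule.Quotient.mk_surjective _ x
    exact hf y)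
  refine ⟨g, hg, ?_⟩
  ext x
  exact LinearMap.congr_fun hg' (Submodule.Quotient.mk x)

theorem V_iff_V' (a b : ℕ) : Q.V K a (b + 1) ↔ Q.V' K (a + 1) b := by
  constructor
  · intro h f hf
    obtain ⟨g, h1, h2, h3⟩ := h f hf
    obtain ⟨g2, h4, h5⟩ := Q.plift K a b g h1 h2
    refine ⟨g2 ∘ₗ Q.d a, fun x => h4 _, ?_, fun x => ?_⟩
    · ext x; simp [Q.dd]
    · rw [← h3]; exact h5 _
  · intro h f hf
    obtain ⟨g, h1, h2, h3⟩ := h f hf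
    obtain ⟨g2, h4, h5⟩ := Q.jext K a b g h1 h2
    refine ⟨K.d ∘ₗ g2, fun x => K.d_mem _ _ (h4 x), fun x => K.dd _, ?_⟩
    ext x
    rw [← h3, ← h5]; rfl

theorem V'_iff_V (a b : ℕ) : Q.V' K a b ↔ Q.V K a b := by
  constructor
  · intro h f hf
    obtain ⟨g, h1, h2⟩ := Q.jext K a b f hf.1 hf.2.2
    obtain ⟨w, h3, h4, h5⟩ := h (K.d ∘ₗ g) ⟨fun x => K.d_mem _ _ (h1 x), fun x => K.dd _, by
      ext x
      have := hf.2.1 x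
      rw [← h2] at this
      exact this⟩
    refine ⟨g - w, fun x => sub_mem (h1 x) (h3 x), fun x => ?_, ?_⟩
    · simp [h5]
    · rw [LinearMap.sub_comp, h4, h2, sub_zero]
  · intro h f hf
    obtain ⟨g, h1, h2⟩ := Q.plift K a b f hf.1 hf.2.1
    obtain ⟨w, h3, h4, h5⟩ := h (g ∘ₗ Q.d a) ⟨fun x => h1 _, fun x => by
      rw [LinearMap.comp_apply, h2]; exact LinearMap.congr_fun hf.2.2 x, by ext x; simp [Q.dd]⟩
    refine ⟨g - w, fun x => sub_mem (h1 x) (h3 x), ?_, fun x => ?_⟩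
    · rw [LinearMap.sub_comp, h5, sub_self]
    · simp [h4, h2]

theorem V_shift (a b : ℕ) : Q.V K (a + b) 0 ↔ Q.V K a b := by
  induction b generalizing a with
  | zero => rfl
  | succ b ih =>
    rw [V_iff_V', V'_iff_V, ← ih]
    rw [show a + (b + 1) = a + 1 + b by omega]

theorem E_iff_V (a : ℕ) : Q.E N a ↔ Q.V K a 0 := by
  constructor
  · intro h f hf
    have hr : ∀ x, f x ∈ LinearMap.range K.ν := fun x => K.exact0 _ (hf.1 x) (hf.2.1 x)
    let e := LinearEquiv.ofInjective K.ν K.ν_inj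
    have he : ∀ y, K.ν (e.symm y) = y := fun y => congrArg Subtype.val (e.apply_symm_apply y)
    obtain ⟨g, hg⟩ := h (e.symm.toLinearMap ∘ₗ f.codRestrict _ hr) (by
      ext x
      apply K.ν_inj
      have := LinearMap.congr_fun hf.2.2 x
      simp only [LinearMap.comp_apply, LinearEquiv.coe_coe, he, LinearMap.zero_apply, map_zero]
      exact this)
    refine ⟨K.ν ∘ₗ g, fun x => K.ν_mem _, fun x => K.dν _, ?_⟩
    rw [LinearMap.comp_assoc, hg]
    ext x
    exact he _
  · intro h f hf
    obtain ⟨g, h1, h2, h3⟩ := h (K.ν ∘ₗ f) ⟨fun x => K.ν_mem _, fun x => K.dν _, by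
      rw [LinearMap.comp_assoc, hf, LinearMap.comp_zero]⟩
    have hr : ∀ x, g x ∈ LinearMap.range K.ν := fun x => K.exact0 _ (h1 x) (h2 x)
    let e := LinearEquiv.ofInjective K.ν K.ν_inj
    have he : ∀ y, K.ν (e.symm y) = y := fun y => congrArg Subtype.val (e.apply_symm_apply y)
    refine ⟨e.symm.toLinearMap ∘ₗ g.codRestrict _ hr, ?_⟩
    ext x
    apply K.ν_inj
    have := LinearMap.congr_fun h3 x
    simp only [LinearMap.comp_apply, LinearEquiv.coe_coe, he]
    exact this

theorem h_iff_V' (b : ℕ) : K.h Q.M 0 (b + 1) ↔ Q.V' K 0 b := by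
  constructor
  · intro h f hf
    have hk : LinearMap.ker Q.ε ≤ LinearMap.ker f := by
      rw [Q.ex0]; rintro _ ⟨x, rfl⟩; exact LinearMap.congr_fun hf.2.2 x
    let e := Q.ε.quotKerEquivOfSurjective Q.surj
    have he : ∀ x, e.symm (Q.ε x) = Submodule.Quotient.mk x := fun x => by
      rw [LinearEquiv.symm_apply_eq]; rfl
    let φ : Q.M →ₗ[R] K.J := (LinearMap.ker Q.ε).liftQ f hk ∘ₗ e.symm.toLinearMap
    have hφ : ∀ x, φ (Q.ε x) = f x := fun x => by
      simp only [φ, LinearMap.comp_apply, LinearEquiv.coe_coe, he]; rfl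
    obtain ⟨ψ, h1, h2⟩ := h φ (fun x => by
      obtain ⟨y, rfl⟩ := Q.surj x
      rw [hφ]; exact hf.1 y) (fun x => by
      obtain ⟨y, rfl⟩ := Q.surj x
      rw [hφ, hf.2.1]; exact zero_mem _)
    refine ⟨ψ ∘ₗ Q.ε, fun x => h1 _, ?_, fun x => ?_⟩
    · ext x
      have : Q.d 0 x ∈ LinearMap.ker Q.ε := by rw [Q.ex0]; exact ⟨x, rfl⟩
      rw [LinearMap.mem_ker] at this
      simp [this]
    · have := h2 (Q.ε x)
      rw [K.W_zero, Submodule.mem_bot, sub_eq_zero, hφ] at this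
      exact this.symm
  · intro h φ h1 h2
    simp only [K.W_zero, Submodule.mem_bot] at h2
    obtain ⟨g, h3, h4, h5⟩ := h (φ ∘ₗ Q.ε) ⟨fun x => h1 _, fun x => h2 _, by
      ext x
      have : Q.d 0 x ∈ LinearMap.ker Q.ε := by rw [Q.ex0]; exact ⟨x, rfl⟩
      rw [LinearMap.mem_ker] at this
      simp [this]⟩
    have hk : LinearMap.ker Q.ε ≤ LinearMap.ker g := by
      rw [Q.ex0]; rintro _ ⟨x, rfl⟩; exact LinearMap.congr_fun h4 x
    let e := Q.ε.quotKerEquivOfSurjective Q.surj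
    have he : ∀ x, e.symm (Q.ε x) = Submodule.Quotient.mk x := fun x => by
      rw [LinearEquiv.symm_apply_eq]; rfl
    let ψ : Q.M →ₗ[R] K.J := (LinearMap.ker Q.ε).liftQ g hk ∘ₗ e.symm.toLinearMap
    have hψ : ∀ x, ψ (Q.ε x) = g x := fun x => by
      simp only [ψ, LinearMap.comp_apply, LinearEquiv.coe_coe, he]; rfl
    refine ⟨ψ, fun x => ?_, fun x => ?_⟩
    · obtain ⟨y, rfl⟩ := Q.surj x
      rw [hψ]; exact h3 y
    · obtain ⟨y, rfl⟩ := Q.surj x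
      rw [hψ, h5, K.W_zero]; simp

theorem E_iff_h (a : ℕ) : Q.E N a ↔ K.h Q.M 0 (a + 1) := by
  rw [h_iff_V', V'_iff_V, ← V_shift, zero_add, E_iff_V]

/-- splice an embedding of `M` into a projective module -/
def splice (T : Type v) [AddCommGroup T] [Module R T] (hT : Module.Projective R T)
    (i : Q.M →ₗ[R] T) (hi : Function.Injective i) : Resl.{u, v} R :=
  letI : ∀ n, AddCommGroup (Nat.casesOn n T Q.P : Type v) := fun n => by
    cases n <;> dsimp only <;> infer_instance
  letI : ∀ n, Module R (Nat.casesOn n T Q.P : Type v) := fun n => by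
    cases n <;> dsimp only <;> infer_instance
  { M := T ⧸ LinearMap.range i
    P := fun n => Nat.casesOn n T Q.P
    proj := fun n => by
      cases n
      · exact hT
      · exact Q.proj _
    d := fun n => by
      cases n
      · exact i ∘ₗ Q.ε
      · exact Q.d _
    ε := (LinearMap.range i).mkQ
    surj := Submodule.mkQ_surjective _
    ex0 := by
      have : LinearMap.range (i ∘ₗ Q.ε) = LinearMap.range i := by
        rw [LinearMap.range_comp, LinearMap.range_eq_top.2 Q.surj, LinearMap.range_eq_map]
      exact (Submodule.ker_mkQ _).trans this.symm
    ex := fun n => by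
      cases n
      · have : LinearMap.ker (i ∘ₗ Q.ε) = LinearMap.ker Q.ε :=
          LinearMap.ker_comp_of_ker_eq_bot _ (LinearMap.ker_eq_bot.2 hi)
        exact this.trans Q.ex0
      · exact Q.ex _ }

theorem splice_E (T : Type v) [AddCommGroup T] [Module R T] (hT : Module.Projective R T)
    (i : Q.M →ₗ[R] T) (hi : Function.Injective i) (a : ℕ) :
    (Q.splice T hT i hi).E N (a + 1) ↔ Q.E N a := Iff.rfl

theorem exists_shift (hemb : ∀ (M : Type v) [AddCommGroup M] [Module R M],
    ∃ (T : Type v) (_ : AddCommGroup T) (_ : Module R T) (_ : Module.Projective R T)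
      (i : M →ₗ[R] T), Function.Injective i) (b : ℕ) :
    ∀ Q : Resl.{u, v} R, ∃ Q' : Resl.{u, v} R, ∀ (N : Type v) [AddCommGroup N] [Module R N],
      ∀ a, Q'.E N (a + b) ↔ Q.E N a := by
  induction b with
  | zero => exact fun Q => ⟨Q, fun N _ _ a => Iff.rfl⟩
  | succ b ih =>
    intro Q
    obtain ⟨T, _, _, hT, i, hi⟩ := hemb Q.M
    obtain ⟨Q', h'⟩ := ih (Q.splice T hT i hi)
    refine ⟨Q', fun N _ _ a => ?_⟩
    rw [show a + (b + 1) = a + 1 + b by omega, h', splice_E]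

end Resl

theorem resl_main (R : Type u) [Ring R] (n B : ℕ)
    (hemb : ∀ (M : Type v) [AddCommGroup M] [Module R M],
    ∃ (T : Type v) (_ : AddCommGroup T) (_ : Module R T) (_ : Module.Projective R T)
      (i : M →ₗ[R] T), Function.Injective i)
    (hK : ∀ (N : Type v) [AddCommGroup N] [Module R N], Nonempty (Pkg.{u, v} R n B N)) :
    ∃ r : ℕ, 0 < r ∧ ∀ (N : Type v) [AddCommGroup N] [Module R N] (Q : Resl.{u, v} R),
      (∃ a, ∀ i < r, Q.E N (a + i)) → ∀ a, Q.E N a := by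
  obtain ⟨r, hr, H⟩ := pkg_main.{u, v} R n B
  refine ⟨r, hr, ?_⟩
  rintro N _ _ Q ⟨a, ha⟩ m
  obtain ⟨Q', hQ'⟩ := Resl.exists_shift hemb B Q
  obtain ⟨K⟩ := hK N
  have := H N K Q'.M (a + B + 1) (by omega) (fun i hi => by
    have := (hQ' N (a + i)).2 (ha i hi)
    rw [Resl.E_iff_h K] at this
    convert this using 1
    omega) (m + B + 1) (by omega)
  rw [← Resl.E_iff_h K] at this
  exact (hQ' N m).1 this

end SecP1

section SecP4
open CategoryTheory
universe v

theorem ext_bridge (R : Type) [Ring R] (M : Type v) [AddCommGroup M] [Module R M] :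
    ∃ Q : Resl.{0, v} R, ∀ (N : Type v) [AddCommGroup N] [Module R N] (a : ℕ),
      (Subsingleton (((Ext ℤ (ModuleCat.{v} R) (a + 1)).obj
            (Opposite.op (ModuleCat.of R M))).obj (ModuleCat.of R N)) ↔ Q.E N a) := by
  let P := ProjectiveResolution.of (ModuleCat.of R M)
  have e0 := (ShortComplex.moduleCat_exact_iff _).1 P.exact₀
  have e1 := fun n => (ShortComplex.moduleCat_exact_iff _).1 (P.exact_succ n)
  refine ⟨{
    M := ((ChainComplex.single₀ (ModuleCat R)).obj (ModuleCat.of R M)).X 0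
    P := fun n => P.complex.X n
    proj := fun n => (IsProjective.iff_projective _).2 (P.projective n)
    d := fun n => (P.complex.d (n + 1) n).hom
    ε := (P.π.f 0).hom
    surj := (ModuleCat.epi_iff_surjective _).1 inferInstance
    ex0 := ?_
    ex := ?_ }, ?_⟩
  · ext x
    constructor
    · intro hx
      exact e0 x hx
    · rintro ⟨y, rfl⟩
      have := P.complex_d_comp_π_f_zero
      exact congrArg (fun f => f.hom y) this
  · intro n
    ext x
    constructor
    · intro hx
      exact e1 n x hx
    · rintro ⟨y, rfl⟩
      have := P.complex.d_comp_d (n + 1 + 1) (n + 1) n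
      exact congrArg (fun f => f.hom y) this
  · intro N _ _ a
    have i := P.isoExt (R := ℤ) (a + 1) (ModuleCat.of R N)
    rw [← ModuleCat.isZero_iff_subsingleton, i.isZero_iff,
      ← HomologicalComplex.exactAt_iff_isZero_homology,
      HomologicalComplex.exactAt_iff' _ a (a + 1) (a + 2) (by simp) (by simp),
      ShortComplex.moduleCat_exact_iff]
    constructor
    · intro H f hf
      obtain ⟨g, hg⟩ := H (ModuleCat.ofHom f) (by
        change P.complex.d (a + 2) (a + 1) ≫ ModuleCat.ofHom f = 0
        ext x
        exact LinearMap.congr_fun hf x)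
      have hg' : P.complex.d (a + 1) a ≫ g = ModuleCat.ofHom f := hg
      exact ⟨g.hom, congrArg (fun f => f.hom) hg'⟩
    · intro H f hf
      have hf' : P.complex.d (a + 2) (a + 1) ≫ f = 0 := hf
      obtain ⟨g, hg⟩ := H (ModuleCat.Hom.hom f) (congrArg (fun f => f.hom) hf')
      refine ⟨ModuleCat.ofHom g, ?_⟩
      change P.complex.d (a + 1) a ≫ ModuleCat.ofHom g = f
      ext x
      exact LinearMap.congr_fun hg x

end SecP4

section SecP5
open MvPolynomial

namespace Reg
noncomputable section
attribute [local instance] MvPolynomial.gradedAlgebra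
variable {S k : Type} [Field k]

theorem hc_mul {d : ℕ} {y : MvPolynomial S k} (hy : y.IsHomogeneous d) (u : MvPolynomial S k)
    (m : ℕ) : homogeneousComponent (d + m) (y * u) = y * homogeneousComponent m u := by
  have := DirectSum.coe_decompose_mul_add_of_left_mem (homogeneousSubmodule S k) (i := d) (j := m)
    (a := y) (b := u) hy
  rwa [← decomposition.decompose'_apply, ← decomposition.decompose'_apply]

theorem hc_mul_lt {d : ℕ} {y : MvPolynomial S k} (hy : y.IsHomogeneous d) (u : MvPolynomial S k)
    (m : ℕ) (hm : m < d) : homogeneousComponent m (y * u) = 0 := by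
  have := DirectSum.coe_decompose_mul_of_left_mem_of_not_le (homogeneousSubmodule S k) (i := d) (n := m)
    (a := y) (b := u) hy (by omega)
  rwa [← decomposition.decompose'_apply]

/-- homogeneous ideal -/
def HI (I : Ideal (MvPolynomial S k)) : Prop := ∀ u ∈ I, ∀ m, homogeneousComponent m u ∈ I

def NZD (y : MvPolynomial S k) (I : Ideal (MvPolynomial S k)) : Prop := ∀ u, y * u ∈ I → u ∈ I

theorem HI_span (s : Set (MvPolynomial S k)) (hs : ∀ x ∈ s, ∃ d, x.IsHomogeneous d) :
    HI (Ideal.span s) := by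
  have := Ideal.homogeneous_span (homogeneousSubmodule S k) s (fun x hx => hs x hx)
  intro u hu m
  exact homogeneousComponent_mem_of_mem this hu m

theorem mem_of_hc {I : Ideal (MvPolynomial S k)} {u : MvPolynomial S k}
    (h : ∀ m, homogeneousComponent m u ∈ I) : u ∈ I := by
  rw [← sum_homogeneousComponent u]
  exact Ideal.sum_mem _ (fun i _ => h i)

theorem swapA {I : Ideal (MvPolynomial S k)} (hI : HI I) {x y : MvPolynomial S k} {d : ℕ}
    (hx : x.IsHomogeneous 1) (hy : y.IsHomogeneous d) (h1 : NZD x I)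
    (h2 : NZD y (I ⊔ Ideal.span {x})) : NZD y I := by
  have key : ∀ m u, u.IsHomogeneous m → y * u ∈ I → u ∈ I := by
    intro m
    induction m with
    | zero =>
      intro u hu hyu
      obtain ⟨i, hi, z, hz, e⟩ := Submodule.mem_sup.1 (h2 u (Ideal.mem_sup_left hyu))
      obtain ⟨v, rfl⟩ := Ideal.mem_span_singleton.1 hz
      have := congrArg (homogeneousComponent 0) e
      rw [map_add, hc_mul_lt hx _ _ one_pos, homogeneousComponent_eq_self hu, add_zero] at this
      rw [← this]
      exact hI _ hi _
    | succ m ih =>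
      intro u hu hyu
      obtain ⟨i, hi, z, hz, e⟩ := Submodule.mem_sup.1 (h2 u (Ideal.mem_sup_left hyu))
      obtain ⟨v, rfl⟩ := Ideal.mem_span_singleton.1 hz
      have := congrArg (homogeneousComponent (1 + m)) e
      rw [map_add, hc_mul hx, homogeneousComponent_eq_self (p := u) (by rwa [add_comm])] at this
      have hv : homogeneousComponent m v ∈ I := by
        apply ih _ (homogeneousComponent_isHomogeneous _ _)
        apply h1
        have e2 : x * (y * homogeneousComponent m v) = y * u - y * homogeneousComponent (1 + m) i := by
          rw [← this]; ring
        rw [e2]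
        exact sub_mem hyu (I.mul_mem_left _ (hI _ hi _))
      rw [← this]
      exact add_mem (hI _ hi _) (I.mul_mem_left _ hv)
  intro u hu
  apply mem_of_hc
  intro m
  apply key m _ (homogeneousComponent_isHomogeneous _ _)
  rw [← hc_mul hy]
  exact hI _ hu _

theorem swapB {I : Ideal (MvPolynomial S k)} {x y : MvPolynomial S k} (h1 : NZD x I)
    (h2 : NZD y (I ⊔ Ideal.span {x})) : NZD x (I ⊔ Ideal.span {y}) := by
  intro u hu
  obtain ⟨i, hi, z, hz, e⟩ := Submodule.mem_sup.1 hu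
  obtain ⟨v, rfl⟩ := Ideal.mem_span_singleton.1 hz
  have hv : v ∈ I ⊔ Ideal.span {x} := by
    apply h2
    have : y * v = x * u - i := by rw [← e]; ring
    rw [this]
    exact sub_mem (Ideal.mem_sup_right (Ideal.mul_mem_right _ _ (Ideal.mem_span_singleton_self x)))
      (Ideal.mem_sup_left hi)
  obtain ⟨i', hi', z', hz', e'⟩ := Submodule.mem_sup.1 hv
  obtain ⟨w, rfl⟩ := Ideal.mem_span_singleton.1 hz'
  have : u - y * w ∈ I := by
    apply h1
    have : x * (u - y * w) = i + y * i' := by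
      rw [mul_sub, ← e, ← e']; ring
    rw [this]
    exact add_mem hi (I.mul_mem_left _ hi')
  have e3 : u = (u - y * w) + y * w := by ring
  rw [e3]
  exact add_mem (Ideal.mem_sup_left this) (Ideal.mem_sup_right (Ideal.mul_mem_right _ _ (Ideal.mem_span_singleton_self y)))

variable (S k) [Fintype S]

/-- ideal generated by `e_1, …, e_j` -/
def Ie (j : ℕ) : Ideal (MvPolynomial S k) := Ideal.span ((fun i => esymm S k (i + 1)) '' Set.Iio j)

theorem Ie_zero : Ie S k 0 = ⊥ := by simp [Ie]

theorem Ie_succ (j : ℕ) : Ie S k (j + 1) = Ie S k j ⊔ Ideal.span {esymm S k (j + 1)} := by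
  have : Set.Iio (j + 1) = insert j (Set.Iio j) := by
    ext i; simp
  rw [Ie, Ie, ← Ideal.span_union, this, Set.image_insert_eq, Set.union_singleton]

theorem esymm_hom (j : ℕ) : (esymm S k j).IsHomogeneous j := by
  unfold esymm
  apply IsHomogeneous.sum
  intro T hT
  have := IsHomogeneous.prod T (fun i => (X i : MvPolynomial S k)) (fun _ => 1) (fun i _ => isHomogeneous_X k i)
  simpa [(Finset.mem_powersetCard.1 hT).2] using this

theorem HI_Ie (j : ℕ) : HI (Ie S k j) := HI_span _ (by
  rintro _ ⟨i, _, rfl⟩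
  exact ⟨_, esymm_hom _ _ _⟩)

def XU (U : Finset S) : Ideal (MvPolynomial S k) := Ideal.span (X '' (U : Set S))

theorem HI_sup (U : Finset S) (j : ℕ) : HI (XU S k U ⊔ Ie S k j) := by
  rw [XU, Ie, ← Ideal.span_union]
  apply HI_span
  rintro _ (⟨i, _, rfl⟩ | ⟨i, _, rfl⟩)
  · exact ⟨_, isHomogeneous_X k i⟩
  · exact ⟨_, esymm_hom _ _ _⟩

theorem XU_insert [DecidableEq S] (U : Finset S) (i : S) :
    XU S k (insert i U) = XU S k U ⊔ Ideal.span {X i} := by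
  rw [XU, XU, ← Ideal.span_union, Finset.coe_insert, Set.image_insert_eq, Set.union_singleton]

theorem NZD_X (U : Finset S) (i : S) (hi : i ∉ U) : NZD (X i : MvPolynomial S k) (XU S k U) := by
  intro u hu
  rw [XU, mem_ideal_span_X_image] at hu ⊢
  intro m hm
  obtain ⟨l, hl, h⟩ := hu (Finsupp.single i 1 + m) (by
    rw [mem_support_iff, coeff_X_mul]
    exact mem_support_iff.1 hm)
  refine ⟨l, hl, ?_⟩
  have : l ≠ i := by rintro rfl; exact hi hl
  simpa [Finsupp.single_apply, this.symm] using h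

theorem NZD_prod {I : Ideal (MvPolynomial S k)} (T : Finset S) (h : ∀ i ∈ T, NZD (X i) I) :
    NZD (∏ i ∈ T, X i) I := by
  classical
  induction T using Finset.induction_on with
  | empty => intro u hu; simpa using hu
  | insert a T ha ih =>
    intro u hu
    rw [Finset.prod_insert ha, mul_assoc] at hu
    exact ih (fun i hi => h i (Finset.mem_insert_of_mem hi)) _ (h a (Finset.mem_insert_self _ _) _ hu)

theorem esymm_sub [DecidableEq S] (U : Finset S) :
    esymm S k (Fintype.card S - U.card) - ∏ i ∈ Uᶜ, X i ∈ XU S k U := by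
  unfold esymm
  have hU : Uᶜ ∈ Finset.powersetCard (Fintype.card S - U.card) (Finset.univ : Finset S) := by
    simp [Finset.mem_powersetCard, Finset.card_compl]
  rw [← Finset.add_sum_erase _ _ hU, add_sub_cancel_left]
  apply Ideal.sum_mem
  intro T hT
  obtain ⟨h1, h2⟩ := Finset.mem_erase.1 hT
  have h3 := (Finset.mem_powersetCard.1 h2).2
  have : ∃ i ∈ T, i ∈ U := by
    by_contra hc
    push Not at hc
    apply h1
    apply Finset.eq_of_subset_of_card_le
    · intro i hi
      simpa using hc i hi
    · rw [h3, Finset.card_compl]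
  obtain ⟨i, hi, hiU⟩ := this
  exact Ideal.mem_of_dvd _ (Finset.dvd_prod_of_mem _ hi) (Ideal.subset_span ⟨i, hiU, rfl⟩)

theorem reg_aux : ∀ (t : ℕ) (U : Finset S), Fintype.card S - U.card = t → ∀ j, j < t →
    NZD (esymm S k (j + 1)) (XU S k U ⊔ Ie S k j) := by
  classical
  intro t
  induction t with
  | zero => intro U _ j hj; omega
  | succ t ih =>
    intro U hU j hj
    have hI : ∀ i, i ∉ U → ∀ j, j < t →
        NZD (esymm S k (j + 1)) ((XU S k U ⊔ Ie S k j) ⊔ Ideal.span {X i}) := by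
      intro i hi j hj
      have := ih (insert i U) (by rw [Finset.card_insert_of_notMem hi]; omega) j hj
      rwa [XU_insert, sup_right_comm] at this
    have hX : ∀ i, i ∉ U → ∀ j, j ≤ t → NZD (X i) (XU S k U ⊔ Ie S k j) := by
      intro i hi j
      induction j with
      | zero => intro _; rw [Ie_zero, sup_bot_eq]; exact NZD_X S k U i hi
      | succ j ihj =>
        intro hj
        rw [Ie_succ, ← sup_assoc]
        exact swapB (ihj (by omega)) (hI i hi j (by omega))
    by_cases hjt : j < t
    · have : ∃ i, i ∉ U := by
        by_contra hc
        push Not at hc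
        have : U = Finset.univ := Finset.eq_univ_iff_forall.2 hc
        subst this
        simp at hU
      obtain ⟨i, hi⟩ := this
      exact swapA (HI_sup S k U j) (isHomogeneous_X k i) (esymm_hom S k _) (hX i hi j hjt.le)
        (hI i hi j hjt)
    · have hjt : j = t := by omega
      subst hjt
      intro u hu
      apply NZD_prod S k Uᶜ (fun i hi => hX i (by simpa using hi) j le_rfl)
      have h1 := esymm_sub S k U
      rw [hU] at h1
      have h2 : (∏ i ∈ Uᶜ, X i) * u = esymm S k (j + 1) * u -
        (esymm S k (j + 1) - ∏ i ∈ Uᶜ, X i) * u := by ring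
      rw [h2]
      exact sub_mem hu (Ideal.mul_mem_right _ _ (Ideal.mem_sup_left h1))

theorem reg_main (j : ℕ) (hj : j < Fintype.card S) (u : MvPolynomial S k)
    (hu : esymm S k (j + 1) * u ∈ Ie S k j) : u ∈ Ie S k j := by
  have := reg_aux S k _ ∅ rfl j (by simpa using hj) u
  simpa [XU, hu] using this

theorem X_pow_mem (x : S) : (X x : MvPolynomial S k) ^ (Fintype.card S) ∈ Ie S k (Fintype.card S) := by
  classical
  have h := prod_C_add_X_eq_sum_esymm k S
  have h2 := congrArg (Polynomial.eval (-X x)) h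
  rw [Polynomial.eval_prod, Finset.prod_eq_zero (Finset.mem_univ x) (by simp), Finset.sum_range_succ',
    Polynomial.eval_add, Polynomial.eval_finsetSum] at h2
  simp only [esymm_zero, map_one, one_mul, Polynomial.eval_pow, Polynomial.eval_X, Polynomial.eval_mul,
    Polynomial.eval_C, Nat.sub_zero] at h2
  have h3 : (-X x : MvPolynomial S k) ^ (Fintype.card S) ∈ Ie S k (Fintype.card S) := by
    rw [← neg_eq_of_add_eq_zero_right h2.symm]
    apply neg_mem
    apply Ideal.sum_mem
    intro i hi
    exact Ideal.mul_mem_right _ _ (Ideal.subset_span ⟨i, Finset.mem_range.1 hi, rfl⟩)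
  rw [neg_pow] at h3
  have h4 := Ideal.mul_mem_left _ ((-1) ^ Fintype.card S) h3
  rwa [← mul_assoc, ← mul_pow, neg_mul_neg, one_mul, one_pow, one_mul] at h4

theorem top_mem (m : ℕ) (hm : Fintype.card S * Fintype.card S < m) (u : MvPolynomial S k)
    (hu : u.IsHomogeneous m) : u ∈ Ie S k (Fintype.card S) := by
  rw [u.as_sum]
  apply Ideal.sum_mem
  intro a ha
  have hd : a.degree = m := hu (mem_support_iff.1 ha) |> fun h => by rwa [Finsupp.degree_eq_weight_one]
  have : ∃ x, Fintype.card S ≤ a x := by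
    by_contra hc
    push Not at hc
    rw [Finsupp.degree_eq_sum] at hd
    have := Finset.sum_le_card_nsmul Finset.univ a (Fintype.card S) (fun x _ => (hc x).le)
    rw [Finset.card_univ, smul_eq_mul] at this
    rw [hd] at this
    omega
  obtain ⟨x, hx⟩ := this
  refine Ideal.mem_of_dvd _ ?_ (X_pow_mem S k x)
  rw [X_pow_eq_monomial, monomial_dvd_monomial]
  refine ⟨Or.inr ?_, one_dvd _⟩
  simpa using hx
end
end Reg

end SecP5

section SecP6a
universe v
set_option linter.style.haveILetI false
set_option linter.unusedSectionVars false

structure KP (k G : Type) [Field k] [Group G] [Fintype G] (n B : ℕ) (N : Type v) [AddCommGroup N]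
    [Module k N] (rN : Representation k G N) where
  J : Type v
  [acg : AddCommGroup J]
  [mod : Module k J]
  ρ : Representation k G J
  Θ : J →ₗ[k] J
  d : J →ₗ[k] J
  Jg : ℕ → Submodule k J
  W : ℕ → ℕ → Submodule k J
  c : ℕ → J →ₗ[k] J
  ν : N →ₗ[k] J
  ρΘ : ∀ u, ∑ g : G, ρ g (Θ (ρ g⁻¹ u)) = u
  Θc : ∀ j u, Θ (c j u) = c j (Θ u)
  ΘJ : ∀ m u, u ∈ Jg m → Θ u ∈ Jg m
  ΘW : ∀ j m u, u ∈ W j m → Θ u ∈ W j m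
  ρd : ∀ g u, ρ g (d u) = d (ρ g u)
  ρc : ∀ g j u, ρ g (c j u) = c j (ρ g u)
  ρν : ∀ g u, ρ g (ν u) = ν (rN g u)
  ρJ : ∀ g m u, u ∈ Jg m → ρ g u ∈ Jg m
  ρW : ∀ g j m u, u ∈ W j m → ρ g u ∈ W j m
  dd : ∀ u, d (d u) = 0
  d_mem : ∀ m u, u ∈ Jg m → d u ∈ Jg (m + 1)
  c_mem : ∀ j m u, u ∈ Jg m → c j u ∈ Jg (m + 2 * (j + 1))
  cd : ∀ j u, c j (d u) = d (c j u)
  W_zero : ∀ m, W 0 m = ⊥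
  W_mono : ∀ j m, W j m ≤ W (j + 1) m
  cW : ∀ j m u, u ∈ Jg m → c j u ∈ W (j + 1) (m + 2 * (j + 1))
  cWW : ∀ i j m u, u ∈ W j m → c i u ∈ W j (m + 2 * (i + 1))
  dW : ∀ j m u, u ∈ W j m → d u ∈ W j (m + 1)
  reg : ∀ j m u, j < n → u ∈ Jg m → c j u ∈ W j (m + 2 * (j + 1)) → u ∈ W j m
  top : ∀ m, B < m → Jg m ≤ W n m
  lift : ∀ j m u, u ∈ W (j + 1) (m + 2 * (j + 1)) → ∃ y ∈ Jg m, ∃ w ∈ W j (m + 2 * (j + 1)),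
    c j y + w = u
  exact : ∀ m u, u ∈ Jg (m + 1) → d u = 0 → ∃ w ∈ Jg m, d w = u
  ν_inj : Function.Injective ν
  ν_mem : ∀ x, ν x ∈ Jg 0
  dν : ∀ x, d (ν x) = 0
  exact0 : ∀ u ∈ Jg 0, d u = 0 → ∃ x, ν x = u

attribute [instance] KP.acg KP.mod

namespace KP
noncomputable section
variable {k G : Type} [Field k] [Group G]

abbrev modOf {J : Type v} [AddCommGroup J] [Module k J] (ρ : Representation k G J) :
    Module (MonoidAlgebra k G) J := Module.compHom J (ρ.asAlgebraHom : MonoidAlgebra k G →+* Module.End k J)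

theorem modOf_single {J : Type v} [AddCommGroup J] [Module k J] (ρ : Representation k G J) (g : G)
    (a : k) (x : J) : letI := modOf ρ; (MonoidAlgebra.single g a • x) = a • ρ g x := by
  change (ρ.asAlgebraHom (MonoidAlgebra.single g a)) x = _
  rw [Representation.asAlgebraHom_single]; rfl

theorem modOf_tower {J : Type v} [AddCommGroup J] [Module k J] (ρ : Representation k G J) :
    letI := modOf ρ; IsScalarTower k (MonoidAlgebra k G) J := by
  letI := modOf ρ
  refine ⟨fun a r x => ?_⟩
  change (ρ.asAlgebraHom (a • r)) x = a • (ρ.asAlgebraHom r) x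
  rw [map_smul]; rfl

def mkSub {J : Type v} [AddCommGroup J] [Module k J] [Module (MonoidAlgebra k G) J]
    [IsScalarTower k (MonoidAlgebra k G) J] (P : Submodule k J)
    (h : ∀ (g : G), ∀ x ∈ P, MonoidAlgebra.single g (1 : k) • x ∈ P) : Submodule (MonoidAlgebra k G) J :=
  { P with
    smul_mem' := by
      intro r x hx
      change r • x ∈ P
      induction r using MonoidAlgebra.induction_on with
      | of g => exact h g x hx
      | add a b ha hb => rw [add_smul]; exact add_mem ha hb
      | smul a r hr => rw [smul_assoc]; exact P.smul_mem _ hr }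

variable [Fintype G] {J : Type v} [AddCommGroup J] [Module k J] [Module (MonoidAlgebra k G) J]
    [IsScalarTower k (MonoidAlgebra k G) J]
  {X : Type v} [AddCommGroup X] [Module k X] [Module (MonoidAlgebra k G) X]
    [IsScalarTower k (MonoidAlgebra k G) X]

def act (g : G) : J →ₗ[k] J := Algebra.lsmul k k J (MonoidAlgebra.single g (1 : k))

theorem act_mul (g h : G) (x : J) : act (k := k) (g * h) x = act (k := k) g (act (k := k) h x) := by
  simp only [act, Algebra.lsmul_coe]
  rw [← mul_smul, MonoidAlgebra.single_mul_single, one_mul]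

theorem act_one (x : J) : act (k := k) (1 : G) x = x := by
  simp only [act, Algebra.lsmul_coe]
  exact one_smul (MonoidAlgebra k G) x

def avg (Θ : J →ₗ[k] J) (ψ : X →ₗ[k] J) : X →ₗ[MonoidAlgebra k G] J :=
  MonoidAlgebra.equivariantOfLinearOfComm (∑ g : G, act (k := k) g ∘ₗ Θ ∘ₗ ψ ∘ₗ act (k := k) g⁻¹) (by
    intro h x
    simp only [LinearMap.sum_apply, LinearMap.comp_apply, Finset.smul_sum]
    rw [← Equiv.sum_comp (Equiv.mulLeft h)]
    refine Finset.sum_congr rfl fun g _ => ?_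
    have e : act (k := k) (h * g)⁻¹ (MonoidAlgebra.single h (1 : k) • x) = act (k := k) g⁻¹ x := by
      have := act_mul (k := k) (h * g)⁻¹ h x
      rw [show (h * g)⁻¹ * h = g⁻¹ by group] at this
      exact this.symm
    simp only [Equiv.coe_mulLeft]
    rw [e, act_mul]
    rfl)

theorem avg_apply (Θ : J →ₗ[k] J) (ψ : X →ₗ[k] J) (x : X) :
    avg (G := G) Θ ψ x = ∑ g : G, act (k := k) g (Θ (ψ (act (k := k) g⁻¹ x))) := by
  simp [avg]

theorem avg_mem (Θ : J →ₗ[k] J) (ψ : X →ₗ[k] J) (P : Submodule k J)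
    (h1 : ∀ (g : G), ∀ x ∈ P, act (k := k) g x ∈ P) (h2 : ∀ x ∈ P, Θ x ∈ P) (h3 : ∀ x, ψ x ∈ P) (x : X) :
    avg (G := G) Θ ψ x ∈ P := by
  rw [avg_apply]
  exact sum_mem fun g _ => h1 _ _ (h2 _ (h3 _))

theorem avg_lin (Θ : J →ₗ[k] J) (hΘ : ∀ u, ∑ g : G, act (k := k) g (Θ (act (k := k) g⁻¹ u)) = u)
    (φ : X →ₗ[MonoidAlgebra k G] J) : avg (G := G) Θ (φ.restrictScalars k) = φ := by
  ext x
  rw [avg_apply]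
  conv_rhs => rw [← hΘ (φ x)]
  refine Finset.sum_congr rfl fun g _ => ?_
  simp [act]

end

variable {k G : Type} [Field k] [Group G] [Fintype G] {n B : ℕ} {N : Type v} [AddCommGroup N]
    [Module k N] {rN : Representation k G N}

theorem toPkg (K : KP k G n B N rN) [Module (MonoidAlgebra k G) N]
    [IsScalarTower k (MonoidAlgebra k G) N]
    (hr : ∀ g x, rN g x = MonoidAlgebra.single g (1 : k) • x) :
    Nonempty (Pkg.{0, v} (MonoidAlgebra k G) n B N) := by
  letI := modOf K.ρ
  haveI := modOf_tower K.ρ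
  have hs : ∀ (g : G) (x : K.J), MonoidAlgebra.single g (1 : k) • x = K.ρ g x := by
    intro g x; rw [modOf_single, one_smul]
  have ha : ∀ (g : G) (x : K.J), act (k := k) g x = K.ρ g x := hs
  have hΘ : ∀ u, ∑ g : G, act (k := k) g (K.Θ (act (k := k) g⁻¹ u)) = u := by
    intro u; simp only [ha]; exact K.ρΘ u
  refine ⟨{
    J := K.J
    d := MonoidAlgebra.equivariantOfLinearOfComm K.d (by intro g x; rw [hs, hs, K.ρd])
    Jg := fun m => mkSub (K.Jg m) (by intro g x hx; rw [hs]; exact K.ρJ _ _ _ hx)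
    W := fun j m => mkSub (K.W j m) (by intro g x hx; rw [hs]; exact K.ρW _ _ _ _ hx)
    c := fun j => MonoidAlgebra.equivariantOfLinearOfComm (K.c j) (by intro g x; rw [hs, hs, K.ρc])
    ν := MonoidAlgebra.equivariantOfLinearOfComm K.ν (by intro g x; rw [hs, K.ρν, hr])
    dd := K.dd
    d_mem := K.d_mem
    c_mem := K.c_mem
    cd := K.cd
    W_zero := fun m => by
      ext x
      have : x ∈ K.W 0 m ↔ x ∈ (⊥ : Submodule k K.J) := by rw [K.W_zero]
      exact this
    W_mono := K.W_mono
    cW := K.cW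
    cWW := K.cWW
    dW := K.dW
    reg := K.reg
    top := K.top
    lift := ?_
    ext := ?_
    exact := K.exact
    ν_inj := K.ν_inj
    ν_mem := K.ν_mem
    dν := K.dν
    exact0 := K.exact0 }⟩
  · intro M _ _ j m φ hφ
    letI : Module k M := Module.compHom M (algebraMap k (MonoidAlgebra k G))
    haveI : IsScalarTower k (MonoidAlgebra k G) M := IsScalarTower.of_algebraMap_smul fun r x => rfl
    let q : (K.Jg m × K.W j (m + 2 * (j + 1))) →ₗ[k] K.J :=
      LinearMap.coprod (K.c j ∘ₗ (K.Jg m).subtype) (K.W j (m + 2 * (j + 1))).subtype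
    obtain ⟨ψ, hψ⟩ := Module.projective_lifting_property q.rangeRestrict
      ((φ.restrictScalars k).codRestrict (LinearMap.range q) (by
        intro x
        obtain ⟨y, hy, w, hw, e⟩ := K.lift j m (φ x) (hφ x)
        exact ⟨(⟨y, hy⟩, ⟨w, hw⟩), e⟩)) q.surjective_rangeRestrict
    have hψ' : ∀ x, K.c j (ψ x).1 + ((ψ x).2 : K.J) = φ x := by
      intro x
      have := congrArg Subtype.val (LinearMap.congr_fun hψ x)
      exact this
    let ψ1 : M →ₗ[k] K.J := (K.Jg m).subtype ∘ₗ LinearMap.fst _ _ _ ∘ₗ ψ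
    let ψ2 : M →ₗ[k] K.J := (K.W j (m + 2 * (j + 1))).subtype ∘ₗ LinearMap.snd _ _ _ ∘ₗ ψ
    refine ⟨avg (G := G) K.Θ ψ1, fun x => ?_, fun x => ?_⟩
    · exact avg_mem (G := G) K.Θ ψ1 (K.Jg m) (fun g x hx => by rw [ha]; exact K.ρJ _ _ _ hx) (K.ΘJ m) (fun x => (ψ x).1.2) x
    · have h2 : avg (G := G) K.Θ ψ2 x ∈ K.W j (m + 2 * (j + 1)) :=
        avg_mem (G := G) K.Θ ψ2 (K.W j _) (fun g x hx => by rw [ha]; exact K.ρW _ _ _ _ hx) (K.ΘW j _) (fun x => (ψ x).2.2) x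
      have h3 : φ x = K.c j (avg (G := G) K.Θ ψ1 x) + avg (G := G) K.Θ ψ2 x := by
        conv_lhs => rw [← avg_lin K.Θ hΘ φ]
        simp only [avg_apply, map_sum]
        rw [← Finset.sum_add_distrib]
        refine Finset.sum_congr rfl fun g _ => ?_
        simp only [ha]
        rw [← K.ρc, ← K.Θc, ← map_add, ← map_add]
        congr 2
        exact (hψ' _).symm
      have h4 : φ x - K.c j (avg (G := G) K.Θ ψ1 x) = avg (G := G) K.Θ ψ2 x := by rw [h3]; abel
      change φ x - K.c j (avg (G := G) K.Θ ψ1 x) ∈ K.W j (m + 2 * (j + 1))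
      rw [h4]
      exact h2
  · intro X Y _ _ _ _ i hi m φ hφ
    letI : Module k X := Module.compHom X (algebraMap k (MonoidAlgebra k G))
    haveI : IsScalarTower k (MonoidAlgebra k G) X := IsScalarTower.of_algebraMap_smul fun r x => rfl
    letI : Module k Y := Module.compHom Y (algebraMap k (MonoidAlgebra k G))
    haveI : IsScalarTower k (MonoidAlgebra k G) Y := IsScalarTower.of_algebraMap_smul fun r x => rfl
    obtain ⟨s, hs'⟩ := LinearMap.exists_leftInverse_of_injective (i.restrictScalars k)
      (LinearMap.ker_eq_bot.2 hi)
    refine ⟨avg (G := G) K.Θ (φ.restrictScalars k ∘ₗ s), fun y => ?_, ?_⟩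
    · exact avg_mem (G := G) K.Θ _ (K.Jg m) (fun g x hx => by rw [ha]; exact K.ρJ _ _ _ hx) (K.ΘJ m) (fun x => hφ _) y
    · ext x
      conv_rhs => rw [← avg_lin K.Θ hΘ φ]
      rw [LinearMap.comp_apply, avg_apply, avg_apply]
      refine Finset.sum_congr rfl fun g _ => ?_
      congr 2
      have e : act (k := k) g⁻¹ (i x) = i (act (k := k) g⁻¹ x) := by simp [act]
      have e2 := LinearMap.congr_fun hs' (act (k := k) g⁻¹ x)
      rw [e]
      change φ (s (i _)) = φ _
      congr 1
end KP

end SecP6a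

section SecP6b
universe v
set_option linter.unusedSectionVars false
namespace FF
noncomputable section

section mat
variable (k : Type) [Field k] (p : ℕ) [NeZero p]

def mδ : Matrix (ZMod p) (ZMod p) k := fun i l => (if l = i + 1 then 1 else 0) - (if l = i then 1 else 0)
def mN : Matrix (ZMod p) (ZMod p) k := fun _ _ => 1
def mσ : Matrix (ZMod p) (ZMod p) k := fun i l => if l.val < i.val then 1 else 0
def mτ : Matrix (ZMod p) (ZMod p) k := fun i l => if i = -1 then if l = 0 then 1 else 0 else 0
def mev : Matrix (ZMod p) (ZMod p) k := fun _ l => if l = 0 then 1 else 0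

theorem mδ_mul (T : Matrix (ZMod p) (ZMod p) k) (i m) : (mδ k p * T) i m = T (i + 1) m - T i m := by
  simp [Matrix.mul_apply, mδ, sub_mul, Finset.sum_sub_distrib]

theorem mul_mδ (T : Matrix (ZMod p) (ZMod p) k) (i m) : (T * mδ k p) i m = T i (m - 1) - T i m := by
  have : ∀ l : ZMod p, (m = l + 1) ↔ (l = m - 1) := fun l => by
    constructor
    · rintro rfl; ring
    · rintro rfl; ring
  simp [Matrix.mul_apply, mδ, mul_sub, Finset.sum_sub_distrib, this]

theorem δN : mδ k p * mN k p = 0 := by ext i m; rw [mδ_mul]; simp [mN]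
theorem Nδ : mN k p * mδ k p = 0 := by ext i m; rw [mul_mδ]; simp [mN]

theorem val_succ (i : ZMod p) (hi : i ≠ -1) : (i + 1).val = i.val + 1 := by
  obtain ⟨q, rfl⟩ : ∃ q, p = q + 1 := ⟨p - 1, by have := NeZero.pos p; omega⟩
  have h1 : i.val ≠ q := fun h => hi (by
    apply ZMod.val_injective
    rw [h, ZMod.val_neg_one])
  have h2 := ZMod.val_lt i
  have h3 : (1 : ZMod (q + 1)).val = 1 := ZMod.val_one'' (by omega)
  rw [ZMod.val_add_of_lt (by omega), h3]

theorem val_m1 : (-1 : ZMod p).val + 1 = p := by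
  obtain ⟨q, rfl⟩ : ∃ q, p = q + 1 := ⟨p - 1, by have := NeZero.pos p; omega⟩
  rw [ZMod.val_neg_one]

theorem δσ : mδ k p * mσ k p + mτ k p * mN k p = 1 := by
  ext i m
  have e : (mτ k p * mN k p) i m = if i = -1 then 1 else 0 := by
    by_cases h : i = -1 <;> simp [Matrix.mul_apply, mτ, mN, h]
  rw [Matrix.add_apply, mδ_mul, e, Matrix.one_apply]
  unfold mσ
  have hm := ZMod.val_lt m
  have h0 := val_m1 p
  have hinj : i = m ↔ i.val = m.val := ⟨fun h => by rw [h], fun h => ZMod.val_injective _ h⟩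
  by_cases h : i = -1
  · subst h
    simp only [neg_add_cancel, ZMod.val_zero, hinj, Nat.not_lt_zero, if_false, if_true]
    by_cases h2 : m.val < (-1 : ZMod p).val
    · rw [if_pos h2, if_neg (by omega)]; ring
    · rw [if_neg h2, if_pos (by omega)]; ring
  · rw [val_succ p i h, if_neg h, add_zero]
    simp only [hinj]
    split_ifs <;> first | omega | ring

theorem σδ : mσ k p * mδ k p = 1 - mev k p := by
  ext i m
  rw [mul_mδ, Matrix.sub_apply, Matrix.one_apply]
  unfold mσ mev
  have hi := ZMod.val_lt i
  have h0 := val_m1 p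
  have hinj : i = m ↔ i.val = m.val := ⟨fun h => by rw [h], fun h => ZMod.val_injective _ h⟩
  by_cases h : m = 0
  · subst h
    simp only [zero_sub, ZMod.val_zero, hinj, if_true]
    split_ifs <;> first | omega | ring
  · have hs := val_succ p (m - 1) (by
      intro h2; apply h; rw [← sub_add_cancel m 1, h2]; ring)
    rw [sub_add_cancel] at hs
    simp only [hinj, if_neg h]
    split_ifs <;> first | omega | ring

theorem Nτ : mN k p * mτ k p = mev k p := by
  ext i m
  simp [Matrix.mul_apply, mN, mτ, mev]

theorem evev : mev k p * mev k p = mev k p := by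
  ext i m
  simp [Matrix.mul_apply, mev]

theorem mδ_inv (c i l : ZMod p) : mδ k p (i + c) (l + c) = mδ k p i l := by
  have : l + c = i + c + 1 ↔ l = i + 1 := by rw [add_right_comm, add_left_inj]
  simp [mδ, this]

end mat

section op
variable {k S : Type} [Field k] [DecidableEq S] {p : ℕ} [NeZero p] {N : Type v} [AddCommGroup N] [Module k N]

/-- operator in coordinate `x` given by a matrix -/
def op (N : Type v) [AddCommGroup N] [Module k N] (x : S) (T : Matrix (ZMod p) (ZMod p) k) :
    Module.End k ((S → ZMod p) → N) where
  toFun f ω := ∑ l, T (ω x) l • f (Function.update ω x l)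
  map_add' f g := by ext ω; simp [Finset.sum_add_distrib]
  map_smul' a f := by ext ω; simp [Finset.smul_sum, smul_comm a]

theorem op_apply (x : S) (T : Matrix (ZMod p) (ZMod p) k) (f : (S → ZMod p) → N) (ω) :
    op N x T f ω = ∑ l, T (ω x) l • f (Function.update ω x l) := rfl

theorem op_mul (x : S) (T U : Matrix (ZMod p) (ZMod p) k) : op N x (T * U) = op N x T * op N x U := by
  ext f ω
  simp only [Module.End.mul_apply, op_apply, Function.update_self, Function.update_idem,
    Matrix.mul_apply, Finset.sum_smul, Finset.smul_sum, smul_smul]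
  rw [Finset.sum_comm]

theorem op_one (x : S) : op N x (1 : Matrix (ZMod p) (ZMod p) k) = 1 := by
  ext f ω
  simp [op_apply, Matrix.one_apply]

theorem op_zero (x : S) : op N x (0 : Matrix (ZMod p) (ZMod p) k) = 0 := by
  ext f ω
  simp [op_apply]

theorem op_add (x : S) (T U : Matrix (ZMod p) (ZMod p) k) : op N x (T + U) = op N x T + op N x U := by
  ext f ω
  simp [op_apply, add_smul, Finset.sum_add_distrib]

theorem op_sub (x : S) (T U : Matrix (ZMod p) (ZMod p) k) : op N x (T - U) = op N x T - op N x U := by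
  ext f ω
  simp [op_apply, sub_smul, Finset.sum_sub_distrib]

theorem op_comm {x y : S} (h : x ≠ y) (T U : Matrix (ZMod p) (ZMod p) k) :
    op N x T * op N y U = op N y U * op N x T := by
  ext f ω
  simp only [Module.End.mul_apply, op_apply, Finset.smul_sum, Function.update_of_ne h,
    Function.update_of_ne h.symm]
  rw [Finset.sum_comm]
  refine Finset.sum_congr rfl fun l _ => Finset.sum_congr rfl fun m _ => ?_
  rw [smul_comm, Function.update_comm h]

theorem op_const_δ (x : S) (a : N) : op N x (mδ k p) (fun _ => a) = 0 := by
  ext ω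
  rw [op_apply, ← Finset.sum_smul]
  simp [mδ]

theorem op_ev (x : S) (f : (S → ZMod p) → N) (ω) :
    op N x (mev k p) f ω = f (Function.update ω x 0) := by
  simp [op_apply, mev]

end op

/-- the data -/
structure Dat (k G S : Type) [Field k] [Group G] [Fintype G] [MulAction G S] (p : ℕ) where
  κ : G → S → ZMod p
  coc : ∀ g h x, κ (g * h) x = κ g (h • x) + κ h x
  θ : (S → ZMod p) → k
  θsum : ∀ ω : S → ZMod p, ∑ g : G, θ (fun x => ω (g • x) + κ g⁻¹ (g • x)) = 1

namespace Dat
variable {k G S : Type} [Field k] [Group G] [Fintype G] [MulAction G S] {p : ℕ} (D : Dat k G S p)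

theorem κ_one (x : S) : D.κ 1 x = 0 := by
  have := D.coc 1 1 x
  simpa using this

def gact (g : G) (ω : S → ZMod p) : S → ZMod p := fun x => ω (g⁻¹ • x) + D.κ g (g⁻¹ • x)

theorem gact_one (ω) : D.gact 1 ω = ω := by ext x; simp [gact, κ_one]

theorem gact_mul (g h : G) (ω) : D.gact (g * h) ω = D.gact g (D.gact h ω) := by
  ext x
  simp only [gact, mul_inv_rev, mul_smul, D.coc, smul_inv_smul]
  ring

theorem θsum' (ω : S → ZMod p) : ∑ g : G, D.θ (D.gact g⁻¹ ω) = 1 := by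
  refine Eq.trans (Finset.sum_congr rfl fun g _ => ?_) (D.θsum ω)
  congr 1
  ext x
  simp [gact]

variable {N : Type v} [AddCommGroup N] [Module k N] (rN : Representation k G N)

def repF : Representation k G ((S → ZMod p) → N) where
  toFun g :=
    { toFun := fun f ω => rN g (f (D.gact g⁻¹ ω))
      map_add' := fun f f' => by ext ω; simp
      map_smul' := fun a f => by ext ω; simp }
  map_one' := by
    ext f ω
    simp [gact_one]
  map_mul' g h := by
    ext f ω
    simp [gact_mul]

theorem repF_apply (g : G) (f : (S → ZMod p) → N) (ω) : D.repF rN g f ω = rN g (f (D.gact g⁻¹ ω)) := rfl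

def ΘF (N : Type v) [AddCommGroup N] [Module k N] : Module.End k ((S → ZMod p) → N) where
  toFun f ω := D.θ ω • f ω
  map_add' f f' := by ext ω; simp
  map_smul' a f := by ext ω; simp [smul_comm a]

theorem ΘF_sum : ∑ g : G, D.repF rN g * D.ΘF N * D.repF rN g⁻¹ = 1 := by
  ext f ω
  simp only [LinearMap.sum_apply, Module.End.mul_apply, Finset.sum_apply, repF_apply, ΘF,
    LinearMap.coe_mk, AddHom.coe_mk, map_smul, inv_inv, ← gact_mul, mul_inv_cancel, gact_one]
  simp only [← Module.End.mul_apply, ← map_mul, mul_inv_cancel, map_one, Module.End.one_apply,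
    ← Finset.sum_smul, θsum', one_smul]

theorem repF_const (g : G) (a : N) : D.repF rN g (fun _ => a) = fun _ => rN g a := by
  ext ω; rfl

variable [DecidableEq S] [NeZero p]

theorem gact_update (g : G) (ω : S → ZMod p) (x : S) (l : ZMod p) :
    D.gact g⁻¹ (Function.update ω (g • x) l) =
      Function.update (D.gact g⁻¹ ω) x (l + D.κ g⁻¹ (g • x)) := by
  ext y
  by_cases h : y = x
  · subst h; simp [gact]
  · have : g • y ≠ g • x := fun h2 => h (MulAction.injective g h2)
    simp [gact, Function.update_of_ne h, Function.update_of_ne this]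

theorem repF_op (g : G) (x : S) (T : Matrix (ZMod p) (ZMod p) k)
    (hT : ∀ c i l, T (i + c) (l + c) = T i l) :
    D.repF rN g * op N x T = op N (g • x) T * D.repF rN g := by
  ext f ω
  simp only [Module.End.mul_apply, repF_apply, op_apply, map_sum, map_smul]
  rw [← Equiv.sum_comp (Equiv.addRight (D.κ g⁻¹ (g • x)))]
  refine Finset.sum_congr rfl fun l _ => ?_
  rw [gact_update]
  have : D.gact g⁻¹ ω x = ω (g • x) + D.κ g⁻¹ (g • x) := by simp [gact]
  rw [this, Equiv.coe_addRight, hT]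

end Dat
end
end FF

end SecP6b

section SecP6c
set_option linter.unusedSectionVars false
open MvPolynomial

namespace AA
noncomputable section
variable (k : Type) [Field k] {S : Type} [DecidableEq S]

def mX (x : S) : Module.End k (MvPolynomial S k) := LinearMap.mulLeft k (X x)

def dX (x : S) : Module.End k (MvPolynomial S k) where
  toFun u := u.divMonomial (Finsupp.single x 1)
  map_add' u w := by rw [add_divMonomial]
  map_smul' a u := by ext m; simp [coeff_divMonomial]

theorem mX_apply (x : S) (u : MvPolynomial S k) : mX k x u = X x * u := rfl
theorem dX_coeff (x : S) (u : MvPolynomial S k) (m) :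
    coeff m (dX k x u) = coeff (Finsupp.single x 1 + m) u := coeff_divMonomial _ _ _

theorem dX_mX (x : S) : dX k x * mX k x = 1 := by
  apply LinearMap.ext
  intro u
  exact X_mul_divMonomial x u

theorem dX_mX_ne {x y : S} (h : x ≠ y) : dX k x * mX k y = mX k y * dX k x := by
  apply LinearMap.ext
  intro u
  ext m
  simp only [Module.End.mul_apply, dX_coeff, mX_apply, coeff_X_mul']
  have e : y ∈ (Finsupp.single x 1 + m).support ↔ y ∈ m.support := by
    simp [Finsupp.single_apply, h]
  simp only [e]
  split_ifs with h2
  · congr 1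
    ext z
    simp only [Finsupp.coe_tsub, Finsupp.coe_add, Pi.sub_apply, Pi.add_apply, Finsupp.single_apply]
    have : m y ≠ 0 := by simpa using h2
    by_cases h3 : y = z
    · subst h3; simp [h]
    · simp [h3]
  · rfl

theorem mX_comm (x y : S) : mX k x * mX k y = mX k y * mX k x := by
  apply LinearMap.ext
  intro u
  simp only [Module.End.mul_apply, mX_apply]
  ring

theorem dX_comm (x y : S) : dX k x * dX k y = dX k y * dX k x := by
  apply LinearMap.ext
  intro u
  ext m
  simp only [Module.End.mul_apply, dX_coeff]
  rw [add_left_comm]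

theorem dX_hom (x : S) (m : ℕ) (u : MvPolynomial S k) (hu : u.IsHomogeneous (m + 1)) :
    (dX k x u).IsHomogeneous m := by
  intro a ha
  rw [dX_coeff] at ha
  have := hu ha
  simp only [map_add] at this
  rw [Finsupp.weight_single] at this
  simp at this
  omega

theorem dX_hom0 (x : S) (u : MvPolynomial S k) (hu : u.IsHomogeneous 0) : dX k x u = 0 := by
  ext a
  rw [dX_coeff, coeff_zero]
  by_contra ha
  have := hu ha
  simp only [map_add] at this
  rw [Finsupp.weight_single] at this
  simp at this

theorem proj_monomial (x : S) (a : S →₀ ℕ) (r : k) (ha : a x ≠ 0) :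
    (1 - mX k x * dX k x) (monomial a r) = 0 := by
  have : monomial a r = mX k x (monomial (a - Finsupp.single x 1) r) := by
    have hh : Finsupp.single x 1 + (a - Finsupp.single x 1) = a := by
      ext z
      simp only [Finsupp.coe_tsub, Finsupp.coe_add, Pi.sub_apply, Pi.add_apply, Finsupp.single_apply]
      by_cases h3 : x = z
      · subst h3; simp; omega
      · simp [h3]
    rw [mX_apply, X, monomial_mul, one_mul, hh]
  rw [this, LinearMap.sub_apply, Module.End.mul_apply, ← Module.End.mul_apply (dX k x), dX_mX]
  simp

theorem proj_one (x : S) : (1 - mX k x * dX k x) (1 : MvPolynomial S k) = 1 := by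
  rw [LinearMap.sub_apply, Module.End.mul_apply, dX_hom0 k x 1 (isHomogeneous_one S k)]
  simp

variable {G : Type} [Group G] [MulAction G S]

def pA (S : Type) {G : Type} [Group G] [MulAction G S] : Representation k G (MvPolynomial S k) where
  toFun g := (rename (fun x : S => g • x)).toLinearMap
  map_one' := by apply LinearMap.ext; intro u; simp; exact rename_id_apply u
  map_mul' g h := by
    apply LinearMap.ext; intro u
    simp [rename_rename, Function.comp_def, mul_smul]

theorem pA_apply (g : G) (u : MvPolynomial S k) : pA k S g u = rename (fun x : S => g • x) u := rfl

theorem pA_mX (g : G) (x : S) : pA k S g * mX k x = mX k (g • x) * pA k S g := by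
  apply LinearMap.ext; intro u
  simp [pA_apply, mX_apply]

end
end AA

namespace LL
noncomputable section
variable (k : Type) [Field k] {S : Type} [DecidableEq S]

abbrev Lam (k : Type) [Field k] (S : Type) := ExteriorAlgebra k (S →₀ k)

abbrev Eg (S : Type) (i : ℕ) : Submodule k (Lam k S) := ⋀[k]^i (S →₀ k)

def et (x : S) : Module.End k (Lam k S) := LinearMap.mulLeft k (ExteriorAlgebra.ι k (Finsupp.single x 1))
def io (x : S) : Module.End k (Lam k S) := CliffordAlgebra.contractLeft (Q := 0) (Finsupp.lapply (R := k) x)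

theorem et_apply (x : S) (w : Lam k S) : et k x w = ExteriorAlgebra.ι k (Finsupp.single x 1) * w := rfl

theorem io_ι_mul (x : S) (v : S →₀ k) (w : Lam k S) :
    io k x (ExteriorAlgebra.ι k v * w) = v x • w - ExteriorAlgebra.ι k v * io k x w :=
  CliffordAlgebra.contractLeft_ι_mul (Q := 0) (d := Finsupp.lapply (R := k) x) v w

theorem io_algebraMap (x : S) (r : k) : io k x (algebraMap k _ r) = 0 :=
  CliffordAlgebra.contractLeft_algebraMap (Q := 0) (Finsupp.lapply (R := k) x) r

theorem io_one (x : S) : io k x (1 : Lam k S) = 0 := by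
  rw [← map_one (algebraMap k _), io_algebraMap]

theorem et_et (x y : S) : et k x * et k y = - (et k y * et k x) := by
  apply LinearMap.ext; intro w
  simp only [Module.End.mul_apply, et_apply, LinearMap.neg_apply, ← mul_assoc]
  rw [← neg_mul, eq_neg_of_add_eq_zero_left (ExteriorAlgebra.ι_add_mul_swap _ _)]

theorem et_sq (x : S) : et k x * et k x = 0 := by
  apply LinearMap.ext; intro w
  simp only [Module.End.mul_apply, et_apply, ← mul_assoc, ExteriorAlgebra.ι_sq_zero, zero_mul]
  rfl

theorem io_sq (x : S) : io k x * io k x = 0 := by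
  apply LinearMap.ext; intro w
  exact CliffordAlgebra.contractLeft_contractLeft (Q := 0) (d := Finsupp.lapply (R := k) x) w

theorem io_io (x y : S) : io k x * io k y = - (io k y * io k x) := by
  apply LinearMap.ext; intro w
  exact CliffordAlgebra.contractLeft_comm (Q := 0) (d := Finsupp.lapply (R := k) x) (d' := Finsupp.lapply (R := k) y) w

theorem io_et (x : S) : io k x * et k x + et k x * io k x = 1 := by
  apply LinearMap.ext; intro w
  simp [et_apply, io_ι_mul]

theorem io_et_ne {x y : S} (h : x ≠ y) : io k x * et k y = - (et k y * io k x) := by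
  apply LinearMap.ext; intro w
  simp [et_apply, io_ι_mul, Finsupp.single_apply, h.symm]

theorem Eg_induction {i : ℕ} {P : Submodule k (Lam k S)}
    (h : ∀ v, ∀ w ∈ Eg k S i, ExteriorAlgebra.ι k v * w ∈ P) : Eg k S (i + 1) ≤ P := by
  unfold Eg
  change LinearMap.range (ExteriorAlgebra.ι k) ^ (i + 1) ≤ P
  rw [pow_succ']
  apply Submodule.mul_le.2
  rintro _ ⟨v, rfl⟩ w hw
  exact h v w hw

theorem ι_mul_mem {i : ℕ} (v : S →₀ k) (w : Lam k S) (hw : w ∈ Eg k S i) :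
    ExteriorAlgebra.ι k v * w ∈ Eg k S (i + 1) := by
  unfold Eg
  change _ ∈ LinearMap.range (ExteriorAlgebra.ι k) ^ (i + 1)
  rw [pow_succ']
  exact Submodule.mul_mem_mul ⟨v, rfl⟩ hw

theorem et_mem {i : ℕ} (x : S) (w : Lam k S) (hw : w ∈ Eg k S i) : et k x w ∈ Eg k S (i + 1) :=
  ι_mul_mem k _ _ hw

theorem Eg_zero (w : Lam k S) (hw : w ∈ Eg k S 0) : ∃ r : k, w = r • (1 : Lam k S) := by
  unfold Eg at hw
  have hw' : w ∈ LinearMap.range (ExteriorAlgebra.ι k : (S →₀ k) →ₗ[k] Lam k S) ^ 0 := hw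
  rw [pow_zero, Submodule.mem_one] at hw'
  obtain ⟨r, rfl⟩ := hw'
  exact ⟨r, Algebra.algebraMap_eq_smul_one r⟩

theorem one_mem_Eg : (1 : Lam k S) ∈ Eg k S 0 := by
  change (1 : Lam k S) ∈ LinearMap.range (ExteriorAlgebra.ι k : (S →₀ k) →ₗ[k] Lam k S) ^ 0
  rw [pow_zero]
  exact Submodule.one_le.1 le_rfl

theorem io_mem0 (x : S) (w : Lam k S) (hw : w ∈ Eg k S 0) : io k x w = 0 := by
  obtain ⟨r, rfl⟩ := Eg_zero k w hw
  rw [map_smul, io_one, smul_zero]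

theorem io_mem (x : S) : ∀ (i : ℕ) (w : Lam k S), w ∈ Eg k S (i + 1) → io k x w ∈ Eg k S i := by
  intro i
  induction i with
  | zero =>
    apply Eg_induction (P := (Eg k S 0).comap (io k x))
    intro v w hw
    rw [Submodule.mem_comap, io_ι_mul, io_mem0 k x w hw, mul_zero, sub_zero]
    exact Submodule.smul_mem _ _ hw
  | succ i ih =>
    apply Eg_induction (P := (Eg k S (i + 1)).comap (io k x))
    intro v w hw
    rw [Submodule.mem_comap, io_ι_mul]
    exact sub_mem (Submodule.smul_mem _ _ hw) (ι_mul_mem k _ _ (ih w hw))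

theorem Eg_et {i : ℕ} {P : Submodule k (Lam k S)}
    (h : ∀ x, ∀ w ∈ Eg k S i, et k x w ∈ P) : Eg k S (i + 1) ≤ P := by
  apply Eg_induction
  intro v w hw
  induction v using Finsupp.induction_linear with
  | zero => simp
  | add f g hf hg => rw [map_add, add_mul]; exact add_mem hf hg
  | single x a =>
    have e : Finsupp.single x a = a • Finsupp.single x (1 : k) := by simp
    rw [e, map_smul, smul_mul_assoc]
    exact P.smul_mem _ (h x w hw)

theorem Eg_top [Fintype S] (i : ℕ) (hi : Fintype.card S < i) (w : Lam k S) (hw : w ∈ Eg k S i) : w = 0 := by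
  have h := exteriorPower.finrank_eq (R := k) (M := S →₀ k) (n := i)
  rw [Module.finrank_finsupp_self, Nat.choose_eq_zero_of_lt hi] at h
  have := Module.finrank_zero_iff.1 h
  exact congrArg Subtype.val (Subsingleton.elim (⟨w, hw⟩ : Eg k S i) 0)

def prE (S : Type) (i : ℕ) : Module.End k (Lam k S) := GradedAlgebra.proj (fun i => ⋀[k]^i (S →₀ k)) i

theorem prE_mem (i : ℕ) (w : Lam k S) : prE k S i w ∈ Eg k S i := by
  exact SetLike.coe_mem _

theorem prE_same (i : ℕ) (w : Lam k S) (hw : w ∈ Eg k S i) : prE k S i w = w := by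
  exact DirectSum.decompose_of_mem_same _ hw

theorem prE_ne (i j : ℕ) (h : i ≠ j) (w : Lam k S) (hw : w ∈ Eg k S i) : prE k S j w = 0 := by
  exact DirectSum.decompose_of_mem_ne _ hw h

variable {G : Type} [Group G] [MulAction G S]

def lam (S : Type) {G : Type} [Group G] [MulAction G S] : Representation k G (Lam k S) where
  toFun g := (ExteriorAlgebra.map (Finsupp.lmapDomain k k (fun x : S => g • x))).toLinearMap
  map_one' := by
    have : Finsupp.lmapDomain k k (fun x : S => (1 : G) • x) = LinearMap.id := by
      ext; simp
    rw [this]; simp; rfl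
  map_mul' g h := by
    have : Finsupp.lmapDomain k k (fun x : S => (g * h) • x) =
      Finsupp.lmapDomain k k (fun x : S => g • x) ∘ₗ Finsupp.lmapDomain k k (fun x : S => h • x) := by
      ext; simp [mul_smul]
    rw [this, ← ExteriorAlgebra.map_comp_map]; rfl

theorem lam_ι_mul (g : G) (v : S →₀ k) (w : Lam k S) : lam k S g (ExteriorAlgebra.ι k v * w) =
    ExteriorAlgebra.ι k (v.mapDomain (fun x => g • x)) * lam k S g w := by
  simp [lam]

theorem lam_algebraMap (g : G) (r : k) : lam k S g (algebraMap k _ r) = algebraMap k _ r := by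
  simp [lam]

theorem lam_one (g : G) : lam k S g (1 : Lam k S) = 1 := by
  simp [lam]

theorem lam_et (g : G) (x : S) : lam k S g * et k x = et k (g • x) * lam k S g := by
  apply LinearMap.ext; intro w
  simp [et_apply, lam_ι_mul]

theorem lam_io (g : G) (x : S) : lam k S g * io k x = io k (g • x) * lam k S g := by
  apply LinearMap.ext; intro w
  simp only [Module.End.mul_apply]
  induction w using CliffordAlgebra.left_induction with
  | algebraMap r =>
    have h1 := io_algebraMap k x r
    have h2 := io_algebraMap k (g • x) r
    have h3 := lam_algebraMap (S := S) k g r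
    erw [h1, h3, h2, map_zero]
  | add a b ha hb => simp only [map_add, ha, hb]
  | ι_mul w v hw =>
    have h1 := io_ι_mul k x v w
    have h2 := lam_ι_mul k g v w
    have h3 := io_ι_mul k (g • x) (v.mapDomain (fun x => g • x)) (lam k S g w)
    rw [Finsupp.mapDomain_apply (MulAction.injective g)] at h3
    change lam k S g (io k x (ExteriorAlgebra.ι k v * w)) = io k (g • x) (lam k S g (ExteriorAlgebra.ι k v * w))
    rw [h1, h2, h3, map_sub, map_smul, lam_ι_mul, hw]

theorem lam_mem (g : G) : ∀ (i : ℕ) (w : Lam k S), w ∈ Eg k S i → lam k S g w ∈ Eg k S i := by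
  intro i
  induction i with
  | zero =>
    intro w hw
    obtain ⟨r, rfl⟩ := Eg_zero k w hw
    rw [map_smul, lam_one]
    exact hw
  | succ i ih =>
    apply Eg_induction (P := (Eg k S (i + 1)).comap (lam k S g))
    intro v w hw
    rw [Submodule.mem_comap, lam_ι_mul]
    exact ι_mul_mem k _ _ (ih w hw)
end
end LL

end SecP6c

section SecP6d
universe v
set_option linter.unusedSectionVars false
open MvPolynomial

namespace TT
noncomputable section
open TensorProduct

section basic
variable {k S : Type} [Field k] {F : Type v} [AddCommGroup F] [Module k F]

def JJ (k S : Type) [Field k] (F : Type v) [AddCommGroup F] [Module k F] : Type v :=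
  MvPolynomial S k ⊗[k] (LL.Lam k S ⊗[k] F)

instance : AddCommGroup (JJ k S F) := inferInstanceAs (AddCommGroup (MvPolynomial S k ⊗[k] (LL.Lam k S ⊗[k] F)))
instance : Module k (JJ k S F) := inferInstanceAs (Module k (MvPolynomial S k ⊗[k] (LL.Lam k S ⊗[k] F)))

/-- the identity -/
def toJ (k S : Type) [Field k] (F : Type v) [AddCommGroup F] [Module k F] :
    MvPolynomial S k ⊗[k] (LL.Lam k S ⊗[k] F) ≃ₗ[k] JJ k S F := LinearEquiv.refl k _

def el (a : MvPolynomial S k) (w : LL.Lam k S) (f : F) : JJ k S F := toJ k S F (a ⊗ₜ[k] (w ⊗ₜ[k] f))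

def t (f : Module.End k (MvPolynomial S k)) (g : Module.End k (LL.Lam k S)) (h : Module.End k F) :
    Module.End k (JJ k S F) :=
  (toJ k S F).toLinearMap ∘ₗ TensorProduct.map f (TensorProduct.map g h) ∘ₗ (toJ k S F).symm.toLinearMap

theorem t_el (f : Module.End k (MvPolynomial S k)) (g : Module.End k (LL.Lam k S)) (h : Module.End k F)
    (a w x) : t f g h (el a w x) = el (f a) (g w) (h x) := rfl

theorem el_add1 (a a' : MvPolynomial S k) (w : LL.Lam k S) (f : F) : el (a + a') w f = el a w f + el a' w f := by
  simp only [el, TensorProduct.add_tmul, map_add]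
theorem el_add2 (a : MvPolynomial S k) (w w' : LL.Lam k S) (f : F) : el a (w + w') f = el a w f + el a w' f := by
  simp only [el, TensorProduct.add_tmul, TensorProduct.tmul_add, map_add]
theorem el_add3 (a : MvPolynomial S k) (w : LL.Lam k S) (f f' : F) : el a w (f + f') = el a w f + el a w f' := by
  simp only [el, TensorProduct.tmul_add, map_add]
theorem el_smul1 (r : k) (a : MvPolynomial S k) (w : LL.Lam k S) (f : F) : el (r • a) w f = r • el a w f := by
  simp only [el, ← TensorProduct.smul_tmul', map_smul]
theorem el_smul2 (r : k) (a : MvPolynomial S k) (w : LL.Lam k S) (f : F) : el a (r • w) f = r • el a w f := by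
  simp only [el, ← TensorProduct.smul_tmul', TensorProduct.tmul_smul, map_smul]
theorem el_smul3 (r : k) (a : MvPolynomial S k) (w : LL.Lam k S) (f : F) : el a w (r • f) = r • el a w f := by
  simp only [el, TensorProduct.tmul_smul, map_smul]

/-- linear in each slot -/
def el1 (w : LL.Lam k S) (f : F) : MvPolynomial S k →ₗ[k] JJ k S F where
  toFun a := el a w f
  map_add' a a' := el_add1 a a' w f
  map_smul' r a := el_smul1 r a w f
def el2 (a : MvPolynomial S k) (f : F) : LL.Lam k S →ₗ[k] JJ k S F where
  toFun w := el a w f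
  map_add' w w' := el_add2 a w w' f
  map_smul' r w := el_smul2 r a w f
def el3 (a : MvPolynomial S k) (w : LL.Lam k S) : F →ₗ[k] JJ k S F where
  toFun f := el a w f
  map_add' f f' := el_add3 a w f f'
  map_smul' r f := el_smul3 r a w f

theorem el_zero1 (w : LL.Lam k S) (f : F) : el (0 : MvPolynomial S k) w f = 0 := (el1 w f).map_zero
theorem el_zero2 (a : MvPolynomial S k) (f : F) : el a (0 : LL.Lam k S) f = 0 := (el2 a f).map_zero
theorem el_zero3 (a : MvPolynomial S k) (w : LL.Lam k S) : el a w (0 : F) = 0 := (el3 a w).map_zero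
theorem el_neg2 (a : MvPolynomial S k) (w : LL.Lam k S) (f : F) : el a (-w) f = - el a w f := (el2 a f).map_neg w
theorem el_sub1 (a a' : MvPolynomial S k) (w : LL.Lam k S) (f : F) : el (a - a') w f = el a w f - el a' w f :=
  (el1 w f).map_sub a a'
theorem el_sub3 (a : MvPolynomial S k) (w : LL.Lam k S) (f f' : F) : el a w (f - f') = el a w f - el a w f' :=
  (el3 a w).map_sub f f'

theorem el_ind {P : JJ k S F → Prop} (h0 : P 0) (ha : ∀ u v, P u → P v → P (u + v))
    (h : ∀ a w f, P (el a w f)) (u : JJ k S F) : P u := by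
  obtain ⟨u, rfl⟩ := (toJ k S F).surjective u
  induction u using TensorProduct.induction_on with
  | zero => rw [map_zero]; exact h0
  | add u v hu hv => rw [map_add]; exact ha _ _ hu hv
  | tmul a l =>
    induction l using TensorProduct.induction_on with
    | zero => rw [TensorProduct.tmul_zero, map_zero]; exact h0
    | add u v hu hv => rw [TensorProduct.tmul_add, map_add]; exact ha _ _ hu hv
    | tmul w f => exact h a w f

theorem el_ext {M : Type v} [AddCommGroup M] [Module k M] {T U : JJ k S F →ₗ[k] M}
    (h : ∀ a w f, T (el a w f) = U (el a w f)) : T = U := by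
  apply LinearMap.ext
  apply el_ind
  · simp
  · intro u v hu hv; rw [map_add, map_add, hu, hv]
  · exact h

theorem t_mul (f f' : Module.End k (MvPolynomial S k)) (g g' : Module.End k (LL.Lam k S))
    (h h' : Module.End k F) : t f g h * t f' g' h' = t (f * f') (g * g') (h * h') :=
  el_ext fun a w x => by simp only [Module.End.mul_apply, t_el]

theorem t_one : t (1 : Module.End k (MvPolynomial S k)) 1 (1 : Module.End k F) = 1 :=
  el_ext fun a w x => by simp only [Module.End.one_apply, t_el]

theorem t_add1 (f f' : Module.End k (MvPolynomial S k)) (g : Module.End k (LL.Lam k S))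
    (h : Module.End k F) : t (f + f') g h = t f g h + t f' g h :=
  el_ext fun a w x => by simp only [LinearMap.add_apply, t_el, el_add1]
theorem t_add2 (f : Module.End k (MvPolynomial S k)) (g g' : Module.End k (LL.Lam k S))
    (h : Module.End k F) : t f (g + g') h = t f g h + t f g' h :=
  el_ext fun a w x => by simp only [LinearMap.add_apply, t_el, el_add2]
theorem t_add3 (f : Module.End k (MvPolynomial S k)) (g : Module.End k (LL.Lam k S))
    (h h' : Module.End k F) : t f g (h + h') = t f g h + t f g h' :=
  el_ext fun a w x => by simp only [LinearMap.add_apply, t_el, el_add3]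
theorem t_zero2 (f : Module.End k (MvPolynomial S k)) (h : Module.End k F) : t f 0 h = 0 :=
  el_ext fun a w x => by simp only [LinearMap.zero_apply, t_el, el_zero2]
theorem t_zero3 (f : Module.End k (MvPolynomial S k)) (g : Module.End k (LL.Lam k S)) :
    t f g (0 : Module.End k F) = 0 :=
  el_ext fun a w x => by simp only [LinearMap.zero_apply, t_el, el_zero3]
theorem t_neg2 (f : Module.End k (MvPolynomial S k)) (g : Module.End k (LL.Lam k S))
    (h : Module.End k F) : t f (-g) h = - t f g h :=
  el_ext fun a w x => by simp only [LinearMap.neg_apply, t_el, el_neg2]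
theorem t_sub1 (f f' : Module.End k (MvPolynomial S k)) (g : Module.End k (LL.Lam k S))
    (h : Module.End k F) : t (f - f') g h = t f g h - t f' g h :=
  el_ext fun a w x => by simp only [LinearMap.sub_apply, t_el, el_sub1]
theorem t_sub3 (f : Module.End k (MvPolynomial S k)) (g : Module.End k (LL.Lam k S))
    (h h' : Module.End k F) : t f g (h - h') = t f g h - t f g h' :=
  el_ext fun a w x => by simp only [LinearMap.sub_apply, t_el, el_sub3]

theorem t_anti {f f' : Module.End k (MvPolynomial S k)} {g g' : Module.End k (LL.Lam k S)}
    {h h' : Module.End k F} (hf : f * f' = f' * f) (hg : g * g' = -(g' * g)) (hh : h * h' = h' * h) :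
    t f g h * t f' g' h' = -(t f' g' h' * t f g h) := by
  rw [t_mul, t_mul, hf, hg, hh, t_neg2]

end basic

section diff
variable {k S : Type} [Field k] [DecidableEq S] {p : ℕ} [NeZero p] (N : Type v) [AddCommGroup N] [Module k N]

abbrev Fn (S : Type) (p : ℕ) (N : Type v) := (S → ZMod p) → N

variable (k p)

def aa (x : S) : Module.End k (JJ k S (Fn S p N)) := t 1 (LL.et k x) (FF.op N x (FF.mδ k p))
def bb (x : S) : Module.End k (JJ k S (Fn S p N)) := t (AA.mX k x) (LL.io k x) (FF.op N x (FF.mN k p))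
def uu (x : S) : Module.End k (JJ k S (Fn S p N)) := t 1 (LL.io k x) (FF.op N x (FF.mσ k p))
def vv (x : S) : Module.End k (JJ k S (Fn S p N)) := t (AA.dX k x) (LL.et k x) (FF.op N x (FF.mτ k p))
def DD (x : S) : Module.End k (JJ k S (Fn S p N)) := aa k p N x + bb k p N x
def ss (x : S) : Module.End k (JJ k S (Fn S p N)) := uu k p N x + vv k p N x
def pp (x : S) : Module.End k (JJ k S (Fn S p N)) :=
  t (1 - AA.mX k x * AA.dX k x) (LL.io k x * LL.et k x) (FF.op N x (FF.mev k p))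

theorem DD_anti {x y : S} (h : x ≠ y) : DD k p N x * DD k p N y = -(DD k p N y * DD k p N x) := by
  have h1 : aa k p N x * aa k p N y = -(aa k p N y * aa k p N x) :=
    t_anti (by simp) (LL.et_et k x y) (FF.op_comm h _ _)
  have h2 : aa k p N x * bb k p N y = -(bb k p N y * aa k p N x) :=
    t_anti (by simp) (by rw [LL.io_et_ne k h.symm, neg_neg]) (FF.op_comm h _ _)
  have h3 : bb k p N x * aa k p N y = -(aa k p N y * bb k p N x) :=
    t_anti (by simp) (LL.io_et_ne k h) (FF.op_comm h _ _)
  have h4 : bb k p N x * bb k p N y = -(bb k p N y * bb k p N x) :=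
    t_anti (AA.mX_comm k x y) (LL.io_io k x y) (FF.op_comm h _ _)
  simp only [DD, add_mul, mul_add, h1, h2, h3, h4]
  abel

theorem ss_anti {x y : S} (h : x ≠ y) : ss k p N x * DD k p N y = -(DD k p N y * ss k p N x) := by
  have h1 : uu k p N x * aa k p N y = -(aa k p N y * uu k p N x) :=
    t_anti (by simp) (LL.io_et_ne k h) (FF.op_comm h _ _)
  have h2 : uu k p N x * bb k p N y = -(bb k p N y * uu k p N x) :=
    t_anti (by simp) (LL.io_io k x y) (FF.op_comm h _ _)
  have h3 : vv k p N x * aa k p N y = -(aa k p N y * vv k p N x) :=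
    t_anti (by simp) (LL.et_et k x y) (FF.op_comm h _ _)
  have h4 : vv k p N x * bb k p N y = -(bb k p N y * vv k p N x) :=
    t_anti (AA.dX_mX_ne k h) (by rw [LL.io_et_ne k h.symm, neg_neg]) (FF.op_comm h _ _)
  simp only [DD, ss, add_mul, mul_add, h1, h2, h3, h4]
  abel

theorem DD_sq (x : S) : DD k p N x * DD k p N x = 0 := by
  simp only [DD, aa, bb, add_mul, mul_add, t_mul, LL.et_sq, LL.io_sq, t_zero2, ← FF.op_mul,
    FF.δN, FF.Nδ, FF.op_zero, t_zero3, add_zero]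

theorem DD_ss (x : S) : DD k p N x * ss k p N x + ss k p N x * DD k p N x = 1 - pp k p N x := by
  simp only [DD, ss, aa, bb, uu, vv, pp, add_mul, mul_add, t_mul, LL.et_sq, LL.io_sq, t_zero2,
    ← FF.op_mul, FF.σδ, FF.Nτ, add_zero, zero_add, one_mul, mul_one, AA.dX_mX, t_sub1]
  have h : t 1 (LL.et k x * LL.io k x) (FF.op N x (FF.mδ k p * FF.mσ k p)) +
      t 1 (LL.et k x * LL.io k x) (FF.op N x (FF.mτ k p * FF.mN k p)) +
      t 1 (LL.io k x * LL.et k x) 1 = 1 := by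
    rw [← t_add3, ← FF.op_add, FF.δσ, FF.op_one, ← t_add2, add_comm, LL.io_et, t_one]
  rw [FF.op_sub, FF.op_one, t_sub3, ← h]
  abel

variable [Fintype S]

def dd : Module.End k (JJ k S (Fn S p N)) := ∑ x, DD k p N x

theorem sum_sq {R : Type*} [Ring R] (D : S → R) (h : ∀ x, D x * D x = 0)
    (h2 : ∀ x y, x ≠ y → D x * D y = -(D y * D x)) (s : Finset S) :
    (∑ x ∈ s, D x) * (∑ x ∈ s, D x) = 0 := by
  induction s using Finset.induction_on with
  | empty => simp
  | insert x s hx ih =>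
    rw [Finset.sum_insert hx, add_mul, mul_add, mul_add, h, ih, zero_add, add_zero, Finset.mul_sum,
      Finset.sum_mul, ← Finset.sum_add_distrib]
    apply Finset.sum_eq_zero
    intro y hy
    rw [h2 x y (by rintro rfl; exact hx hy)]
    simp

theorem dd_sq : dd k p N (S := S) * dd k p N = 0 :=
  sum_sq _ (DD_sq k p N) (fun _ _ => DD_anti k p N) _

theorem dd_ss (x : S) : dd k p N * ss k p N x + ss k p N x * dd k p N = 1 - pp k p N x := by
  rw [← DD_ss, dd, Finset.sum_mul, Finset.mul_sum, ← Finset.sum_add_distrib]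
  apply Finset.sum_eq_single x
  · intro y _ hy
    rw [ss_anti k p N hy.symm]; simp
  · simp

theorem ring_aux {R : Type*} [Ring R] {i j e f : R} (h1 : i * j = -(j * i)) (h2 : e * f = -(f * e))
    (h3 : i * f = -(f * i)) (h4 : e * j = -(j * e)) : (i * e) * (j * f) = (j * f) * (i * e) := by
  calc (i * e) * (j * f) = i * (e * j) * f := by simp only [mul_assoc]
    _ = - ((i * j) * (e * f)) := by rw [h4]; simp [mul_assoc]
    _ = - ((j * (i * f)) * e) := by rw [h1, h2]; simp [mul_assoc]
    _ = _ := by rw [h3]; simp [mul_assoc]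

theorem pp_comm (x y : S) : Commute (pp k p N x) (pp k p N y) := by
  by_cases h : x = y
  · subst h; exact Commute.refl _
  change _ * _ = _ * _
  have e1 : (1 - AA.mX k x * AA.dX k x) * (1 - AA.mX k y * AA.dX k y) =
      (1 - AA.mX k y * AA.dX k y) * (1 - AA.mX k x * AA.dX k x) := by
    have h1 : Commute (AA.mX k x) (AA.mX k y) := AA.mX_comm k x y
    have h2 : Commute (AA.dX k x) (AA.dX k y) := AA.dX_comm k x y
    have h3 : Commute (AA.dX k x) (AA.mX k y) := AA.dX_mX_ne k h
    have h4 : Commute (AA.mX k x) (AA.dX k y) := (AA.dX_mX_ne k (Ne.symm h)).symm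
    have h5 := ((h1.mul_right h4).mul_left (h3.mul_right h2)).eq
    rw [sub_mul, mul_sub, mul_sub, sub_mul, mul_sub, mul_sub, h5]
    simp only [one_mul, mul_one]
    abel
  have e2 : (LL.io k x * LL.et k x) * (LL.io k y * LL.et k y) =
      (LL.io k y * LL.et k y) * (LL.io k x * LL.et k x) := by
    have h1 := LL.io_io k x y
    have h2 := LL.et_et k x y
    have h3 := LL.io_et_ne k h
    have h4 := LL.io_et_ne k (Ne.symm h)
    have h4' : LL.et k x * LL.io k y = - (LL.io k y * LL.et k x) := by rw [h4, neg_neg]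
    exact ring_aux h1 h2 h3 h4'
  rw [pp, pp, t_mul, t_mul, e1, e2, FF.op_comm h]

end diff
end
end TT

end SecP6d

section SecP6e
universe v
set_option linter.unusedSectionVars false
open MvPolynomial

namespace TT
noncomputable section
open TensorProduct

section gr
variable {k S : Type} [Field k] [DecidableEq S] {F : Type v} [AddCommGroup F] [Module k F]

def Gr (F : Type v) [AddCommGroup F] [Module k F] (I : Ideal (MvPolynomial S k)) (m : ℕ) : Submodule k (JJ k S F) :=
  Submodule.span k {u | ∃ (α i : ℕ) (a : MvPolynomial S k) (w : LL.Lam k S) (f : F),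
    2 * α + i = m ∧ a.IsHomogeneous α ∧ a ∈ I ∧ w ∈ LL.Eg k S i ∧ u = el a w f}

theorem Gr_el (I : Ideal (MvPolynomial S k)) {m α i : ℕ} {a : MvPolynomial S k} {w : LL.Lam k S} (f : F)
    (hm : 2 * α + i = m) (ha : a.IsHomogeneous α) (haI : a ∈ I) (hw : w ∈ LL.Eg k S i) : el a w f ∈ Gr F I m :=
  Submodule.subset_span ⟨α, i, a, w, f, hm, ha, haI, hw, rfl⟩

theorem Gr_le (I : Ideal (MvPolynomial S k)) {m : ℕ} {P : Submodule k (JJ k S F)}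
    (h : ∀ (α i : ℕ) (a : MvPolynomial S k) (w : LL.Lam k S) (f : F),
      2 * α + i = m → a.IsHomogeneous α → a ∈ I → w ∈ LL.Eg k S i → el a w f ∈ P) : Gr F I m ≤ P := by
  apply Submodule.span_le.2
  rintro _ ⟨α, i, a, w, f, hm, ha, haI, hw, rfl⟩
  exact h α i a w f hm ha haI hw

theorem Gr_map (I I' : Ideal (MvPolynomial S k)) {m m' : ℕ} (T : Module.End k (JJ k S F))
    (h : ∀ (α i : ℕ) (a : MvPolynomial S k) (w : LL.Lam k S) (f : F),
      2 * α + i = m → a.IsHomogeneous α → a ∈ I → w ∈ LL.Eg k S i → T (el a w f) ∈ Gr F I' m')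
    (u : JJ k S F) (hu : u ∈ Gr F I m) : T u ∈ Gr F I' m' :=
  Gr_le I (P := (Gr F I' m').comap T) h hu

theorem Gr_mono {I I' : Ideal (MvPolynomial S k)} (h : I ≤ I') (m : ℕ) : Gr F I m ≤ Gr F I' m :=
  Gr_le I fun _ _ _ _ f hm ha haI hw => Gr_el I' f hm ha (h haI) hw

theorem Gr_bot (m : ℕ) : Gr F (⊥ : Ideal (MvPolynomial S k)) m = ⊥ := by
  rw [eq_bot_iff]
  apply Gr_le
  intro α i a w f hm ha haI hw
  rw [Ideal.mem_bot] at haI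
  rw [haI, el_zero1]; exact zero_mem _

theorem Gr_t (I : Ideal (MvPolynomial S k)) (m : ℕ) (h : Module.End k F) (u : JJ k S F) (hu : u ∈ Gr F I m) :
    t 1 1 h u ∈ Gr F I m :=
  Gr_map I I (t 1 1 h) (fun _ _ _ _ _ hm ha haI hw => Gr_el I _ hm ha haI hw) u hu

/-- graded projection -/
def prJ (m : ℕ) : Module.End k (JJ k S F) :=
  ∑ x ∈ (Finset.range (m + 1) ×ˢ Finset.range (m + 1)).filter (fun x => 2 * x.1 + x.2 = m),
    t (homogeneousComponent x.1) (LL.prE k S x.2) 1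

theorem prJ_same (I : Ideal (MvPolynomial S k)) (m : ℕ) (u : JJ k S F) (hu : u ∈ Gr F I m) : prJ m u = u := by
  have : Gr F I m ≤ LinearMap.eqLocus (prJ m) (1 : Module.End k (JJ k S F)) := by
    apply Gr_le
    intro α i a w f hm ha haI hw
    change prJ m _ = _
    rw [prJ, LinearMap.sum_apply, Finset.sum_eq_single (α, i)]
    · rw [t_el, LL.prE_same k i w hw, homogeneousComponent_of_mem ha]
      simp
    · rintro ⟨β, j⟩ hb hne
      simp only [Finset.mem_filter, Finset.mem_product, Finset.mem_range] at hb
      rw [t_el, homogeneousComponent_of_mem ha]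
      by_cases h : β = α
      · have : i ≠ j := by
          rintro rfl; exact hne (by rw [h])
        rw [LL.prE_ne k i j this w hw, el_zero2]
      · rw [if_neg h, el_zero1]
    · intro h
      exfalso; apply h
      simp only [Finset.mem_filter, Finset.mem_product, Finset.mem_range]
      omega
  exact this hu

theorem prJ_mem (I : Ideal (MvPolynomial S k)) (hI : Reg.HI I) (m : ℕ) (a : MvPolynomial S k) (ha : a ∈ I)
    (w : LL.Lam k S) (f : F) : prJ m (el a w f) ∈ Gr F I m := by
  rw [prJ, LinearMap.sum_apply]
  apply Submodule.sum_mem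
  rintro ⟨α, i⟩ hb
  simp only [Finset.mem_filter, Finset.mem_product, Finset.mem_range] at hb
  rw [t_el]
  exact Gr_el I _ hb.2 (homogeneousComponent_isHomogeneous _ _) (hI a ha α) (LL.prE_mem k i w)

theorem Gr_reg (I : Ideal (MvPolynomial S k)) (hI : Reg.HI I) (e : MvPolynomial S k)
    (he : ∀ u, e * u ∈ I → u ∈ I) (m m' : ℕ) (u : JJ k S F) (hu : u ∈ Gr F ⊤ m)
    (h : t (LinearMap.mulLeft k e) 1 1 u ∈ Gr F I m') : u ∈ Gr F I m := by
  let A := MvPolynomial S k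
  let I' : Submodule k A := I.restrictScalars k
  let μ : (A ⧸ I') →ₗ[k] (A ⧸ I') := I'.mapQ I' (LinearMap.mulLeft k e) (fun a ha => I.mul_mem_left e ha)
  have hμ : Function.Injective μ := by
    rw [← LinearMap.ker_eq_bot, eq_bot_iff]
    intro a ha
    obtain ⟨a, rfl⟩ := I'.mkQ_surjective a
    rw [LinearMap.mem_ker] at ha
    change I'.mkQ (e * a) = 0 at ha
    rw [Submodule.mkQ_apply, Submodule.Quotient.mk_eq_zero] at ha
    rw [Submodule.mem_bot, Submodule.mkQ_apply, Submodule.Quotient.mk_eq_zero]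
    exact he a ha
  let L := LL.Lam k S ⊗[k] F
  let qq : JJ k S F →ₗ[k] (A ⧸ I') ⊗[k] L := (I'.mkQ.rTensor L) ∘ₗ (toJ k S F).symm.toLinearMap
  have h1 : ∀ x, qq (t (LinearMap.mulLeft k e) 1 1 x) = μ.rTensor L (qq x) := by
    intro x
    have : qq ∘ₗ (t (LinearMap.mulLeft k e) 1 1) = μ.rTensor L ∘ₗ qq := el_ext fun a w f => rfl
    exact LinearMap.congr_fun this x
  have h2 : Gr F I m' ≤ LinearMap.ker qq := by
    apply Gr_le
    intro α i a w f hm ha haI hw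
    change (I'.mkQ a) ⊗ₜ[k] (w ⊗ₜ[k] f) = 0
    have : I'.mkQ a = 0 := by
      rw [Submodule.mkQ_apply, Submodule.Quotient.mk_eq_zero]; exact haI
    rw [this, TensorProduct.zero_tmul]
  have h3 : qq u = 0 := by
    have h4 := h2 h
    rw [LinearMap.mem_ker, h1] at h4
    exact (map_eq_zero_iff _ (Module.Flat.rTensor_preserves_injective_linearMap (M := L) μ hμ)).1 h4
  have hex : Function.Exact I'.subtype I'.mkQ := LinearMap.exact_subtype_mkQ I'
  obtain ⟨y, hy⟩ := ((rTensor_exact L hex I'.mkQ_surjective) ((toJ k S F).symm u)).1 h3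
  have h5 : ∀ y : I' ⊗[k] L, prJ m (toJ k S F (I'.subtype.rTensor L y)) ∈ Gr F I m := by
    intro y
    induction y using TensorProduct.induction_on with
    | zero => simp
    | add u v hu hv => rw [map_add, map_add, map_add]; exact add_mem hu hv
    | tmul a l =>
      induction l using TensorProduct.induction_on with
      | zero => rw [TensorProduct.tmul_zero, map_zero, map_zero, map_zero]; exact zero_mem _
      | add u v hu hv => rw [TensorProduct.tmul_add, map_add, map_add, map_add]; exact add_mem hu hv
      | tmul w f => exact prJ_mem I hI m a a.2 w f
  have h6 := h5 y
  rw [hy, LinearEquiv.apply_symm_apply, prJ_same ⊤ m u hu] at h6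
  exact h6

end gr
end
end TT

end SecP6e

section SecP6f
universe v
set_option linter.unusedSectionVars false
open MvPolynomial

namespace TT
noncomputable section
open TensorProduct

variable {k S : Type} [Field k] [DecidableEq S] {p : ℕ} [NeZero p] {N : Type v} [AddCommGroup N] [Module k N]

theorem DD_mem (I : Ideal (MvPolynomial S k)) (x : S) (m : ℕ) (u) (hu : u ∈ Gr (Fn S p N) I m) :
    DD k p N x u ∈ Gr (Fn S p N) I (m + 1) := by
  refine Gr_map I I _ (fun α i a w f hm ha haI hw => ?_) u hu
  rw [DD, LinearMap.add_apply, aa, bb, t_el, t_el]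
  apply add_mem
  · exact Gr_el (α := α) (i := i + 1) I _ (by omega) ha haI (LL.et_mem k x w hw)
  · cases i with
    | zero => rw [LL.io_mem0 k x w hw, el_zero2]; exact zero_mem _
    | succ i =>
      refine Gr_el (α := 1 + α) (i := i) I _ (by omega) ((isHomogeneous_X k x).mul ha)
        (I.mul_mem_left _ haI) (LL.io_mem k x i w hw)

theorem ss_mem (x : S) (m : ℕ) (u) (hu : u ∈ Gr (Fn S p N) (⊤ : Ideal (MvPolynomial S k)) (m + 1)) :
    ss k p N x u ∈ Gr (Fn S p N) ⊤ m := by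
  refine Gr_map ⊤ ⊤ _ (fun α i a w f hm ha haI hw => ?_) u hu
  rw [ss, LinearMap.add_apply, uu, vv, t_el, t_el]
  apply add_mem
  · cases i with
    | zero => rw [LL.io_mem0 k x w hw, el_zero2]; exact zero_mem _
    | succ i =>
      exact Gr_el (α := α) (i := i) ⊤ _ (by omega) ha trivial (LL.io_mem k x i w hw)
  · cases α with
    | zero => rw [AA.dX_hom0 k x a ha, el_zero1]; exact zero_mem _
    | succ α =>
      exact Gr_el (α := α) (i := i + 1) ⊤ _ (by omega) (AA.dX_hom k x α a ha) trivial (LL.et_mem k x w hw)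

theorem ss_mem0 (x : S) (u) (hu : u ∈ Gr (Fn S p N) (⊤ : Ideal (MvPolynomial S k)) 0) :
    ss k p N x u = 0 := by
  have : Gr (Fn S p N) (⊤ : Ideal (MvPolynomial S k)) 0 ≤ LinearMap.ker (ss k p N x) := by
    apply Gr_le
    intro α i a w f hm ha haI hw
    obtain rfl : α = 0 := by omega
    obtain rfl : i = 0 := by omega
    rw [LinearMap.mem_ker, ss, LinearMap.add_apply, uu, vv, t_el, t_el, LL.io_mem0 k x w hw,
      AA.dX_hom0 k x a ha, el_zero1, el_zero2, add_zero]
  exact this hu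

variable [Fintype S]

theorem dd_mem (I : Ideal (MvPolynomial S k)) (m : ℕ) (u) (hu : u ∈ Gr (Fn S p N) I m) :
    dd k p N u ∈ Gr (Fn S p N) I (m + 1) := by
  rw [dd, LinearMap.sum_apply]
  exact Submodule.sum_mem _ fun x _ => DD_mem I x m u hu

theorem dd_dd (u : JJ k S (Fn S p N)) : dd k p N (dd k p N u) = 0 := by
  rw [← Module.End.mul_apply, dd_sq]; rfl

theorem dd_ss' (x : S) (u : JJ k S (Fn S p N)) (hu : dd k p N u = 0) :
    u = pp k p N x u + dd k p N (ss k p N x u) := by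
  have := LinearMap.congr_fun (dd_ss k p N x) u
  rw [LinearMap.add_apply, Module.End.mul_apply, Module.End.mul_apply, hu, map_zero, add_zero,
    LinearMap.sub_apply, Module.End.one_apply] at this
  rw [this]; abel

variable (k p N) in
def PP (l : List S) : Module.End k (JJ k S (Fn S p N)) := (l.map (pp k p N)).prod

theorem PP_cons (x : S) (l : List S) (u) : PP k p N (x :: l) u = pp k p N x (PP k p N l u) := by
  simp [PP]

theorem homot (m : ℕ) (z) (hz : z ∈ Gr (Fn S p N) (⊤ : Ideal (MvPolynomial S k)) (m + 1))
    (hd : dd k p N z = 0) (l : List S) :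
    ∃ w ∈ Gr (Fn S p N) (⊤ : Ideal (MvPolynomial S k)) m, z = PP k p N l z + dd k p N w := by
  induction l with
  | nil => exact ⟨0, zero_mem _, by simp [PP]⟩
  | cons x l ih =>
    obtain ⟨w, hw, e⟩ := ih
    have e1 : PP k p N l z = z - dd k p N w := eq_sub_of_add_eq e.symm
    have h1 : PP k p N l z ∈ Gr (Fn S p N) (⊤ : Ideal (MvPolynomial S k)) (m + 1) := by
      rw [e1]; exact sub_mem hz (dd_mem _ _ _ hw)
    have h2 : dd k p N (PP k p N l z) = 0 := by
      rw [e1, map_sub, hd, dd_dd, sub_zero]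
    have h3 := dd_ss' x _ h2
    refine ⟨ss k p N x (PP k p N l z) + w, add_mem (ss_mem x m _ h1) hw, ?_⟩
    rw [PP_cons, map_add, ← add_assoc, ← h3]
    exact e

theorem homot0 (z) (hz : z ∈ Gr (Fn S p N) (⊤ : Ideal (MvPolynomial S k)) 0)
    (hd : dd k p N z = 0) (l : List S) : z = PP k p N l z := by
  induction l with
  | nil => simp [PP]
  | cons x l ih =>
    rw [PP_cons, ← ih]
    have h3 := dd_ss' x z hd
    rwa [ss_mem0 x z hz, map_zero, add_zero] at h3

theorem PP_kill (l : List S) (x : S) (hx : x ∈ l) (u) (hu : pp k p N x u = 0) : PP k p N l u = 0 := by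
  induction l with
  | nil => simp at hx
  | cons y l ih =>
    rw [PP_cons]
    by_cases h : x ∈ l
    · rw [ih h, map_zero]
    · obtain rfl : x = y := by
        rcases List.mem_cons.1 hx with h2 | h2
        · exact h2
        · exact absurd h2 h
      have hc : Commute (pp k p N x) (PP k p N l) := by
        apply Commute.list_prod_right
        intro z hz
        obtain ⟨y, _, rfl⟩ := List.mem_map.1 hz
        exact pp_comm k p N x y
      rw [← Module.End.mul_apply, hc.eq, Module.End.mul_apply, hu, map_zero]

theorem PP_pos (m : ℕ) (z) (hz : z ∈ Gr (Fn S p N) (⊤ : Ideal (MvPolynomial S k)) (m + 1)) :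
    PP k p N Finset.univ.toList z = 0 := by
  have : Gr (Fn S p N) (⊤ : Ideal (MvPolynomial S k)) (m + 1) ≤ LinearMap.ker (PP k p N Finset.univ.toList) := by
    apply Gr_le
    intro α i a w f hm ha haI hw
    cases i with
    | succ i =>
      have h : LL.Eg k S (i + 1) ≤ LinearMap.ker ((PP k p N Finset.univ.toList) ∘ₗ el2 a f) := by
        apply LL.Eg_et
        intro x w hw
        rw [LinearMap.mem_ker]
        apply PP_kill _ x (by simp)
        change pp k p N x (el a (LL.et k x w) f) = 0
        rw [pp, t_el, ← Module.End.mul_apply, mul_assoc, LL.et_sq, mul_zero]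
        exact el_zero2 _ _
      exact h hw
    | zero =>
      rw [LinearMap.mem_ker]
      rw [a.as_sum]
      change ((PP k p N Finset.univ.toList) ∘ₗ el1 w f) _ = 0
      rw [map_sum]
      apply Finset.sum_eq_zero
      intro b hb
      have hb' := ha (mem_support_iff.1 hb)
      have : ∃ x, b x ≠ 0 := by
        by_contra! h
        have : b = 0 := Finsupp.ext h
        rw [this, map_zero] at hb'
        omega
      obtain ⟨x, hx⟩ := this
      apply PP_kill _ x (by simp)
      change pp k p N x (el _ w f) = 0
      rw [pp, t_el, AA.proj_monomial k x b _ hx]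
      exact el_zero1 _ _
  exact this hz

theorem exact_pos (m : ℕ) (z) (hz : z ∈ Gr (Fn S p N) (⊤ : Ideal (MvPolynomial S k)) (m + 1))
    (hd : dd k p N z = 0) : ∃ w ∈ Gr (Fn S p N) (⊤ : Ideal (MvPolynomial S k)) m, dd k p N w = z := by
  obtain ⟨w, hw, e⟩ := homot m z hz hd Finset.univ.toList
  rw [PP_pos m z hz, zero_add] at e
  exact ⟨w, hw, e.symm⟩

variable (k S p N) in
def nu : N →ₗ[k] JJ k S (Fn S p N) :=
  el3 1 1 ∘ₗ (LinearMap.pi fun _ => LinearMap.id : N →ₗ[k] Fn S p N)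

theorem nu_apply (x : N) : nu k S p N x = el 1 1 (fun _ => x) := rfl

theorem nu_mem (x : N) : nu k S p N x ∈ Gr (Fn S p N) (⊤ : Ideal (MvPolynomial S k)) 0 :=
  Gr_el (α := 0) (i := 0) ⊤ _ rfl (isHomogeneous_one S k) trivial (LL.one_mem_Eg k)

theorem dd_nu (x : N) : dd k p N (nu k S p N x) = 0 := by
  rw [dd, LinearMap.sum_apply]
  apply Finset.sum_eq_zero
  intro y _
  rw [DD, LinearMap.add_apply, aa, bb, nu_apply, t_el, t_el, LL.io_one, FF.op_const_δ, el_zero2, el_zero3,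
    add_zero]

theorem nu_inj : Function.Injective (nu k S p N) := by
  let r : JJ k S (Fn S p N) →ₗ[k] N :=
    (LinearMap.proj (0 : S → ZMod p)) ∘ₗ (TensorProduct.lid k (Fn S p N)).toLinearMap ∘ₗ
      (TensorProduct.map (aeval (fun _ : S => (0 : k)) : MvPolynomial S k →ₐ[k] k).toLinearMap
        ((TensorProduct.lid k (Fn S p N)).toLinearMap ∘ₗ
          TensorProduct.map (ExteriorAlgebra.algebraMapInv.toLinearMap) LinearMap.id)) ∘ₗ
      (toJ k S (Fn S p N)).symm.toLinearMap
  apply Function.LeftInverse.injective (g := r)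
  intro x
  simp [r, nu_apply, el]

theorem op_list (l : List S) (f : Fn S p N) (ω ω' : S → ZMod p) (h : ∀ x, x ∉ l → ω x = ω' x) :
    (l.map (fun x => FF.op N x (FF.mev k p))).prod f ω = (l.map (fun x => FF.op N x (FF.mev k p))).prod f ω' := by
  induction l generalizing ω ω' with
  | nil =>
    have : ω = ω' := by ext x; exact h x (by simp)
    rw [this]
  | cons x l ih =>
    simp only [List.map_cons, List.prod_cons, Module.End.mul_apply, FF.op_ev]
    apply ih
    intro y hy
    by_cases hyx : y = x
    · subst hyx; simp
    · rw [Function.update_of_ne hyx, Function.update_of_ne hyx]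
      exact h y (by simp [hyx, hy])

theorem PP_el (l : List S) (f : Fn S p N) : PP k p N l (el 1 1 f) =
    el 1 1 ((l.map (fun x => FF.op N x (FF.mev k p))).prod f) := by
  induction l with
  | nil => simp [PP]
  | cons x l ih =>
    rw [PP_cons, ih, pp, t_el, AA.proj_one]
    have : (LL.io k x * LL.et k x) (1 : LL.Lam k S) = 1 := by
      have := LinearMap.congr_fun (LL.io_et k x) 1
      rwa [LinearMap.add_apply, Module.End.mul_apply (LL.et k x), LL.io_one, map_zero, add_zero] at this
    rw [this]
    simp

theorem exact_zero (z) (hz : z ∈ Gr (Fn S p N) (⊤ : Ideal (MvPolynomial S k)) 0)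
    (hd : dd k p N z = 0) : ∃ x, nu k S p N x = z := by
  have : Gr (Fn S p N) (⊤ : Ideal (MvPolynomial S k)) 0 ≤
      (LinearMap.range (nu k S p N)).comap (PP k p N Finset.univ.toList) := by
    apply Gr_le
    intro α i a w f hm ha haI hw
    obtain rfl : α = 0 := by omega
    obtain rfl : i = 0 := by omega
    obtain ⟨r, rfl⟩ := LL.Eg_zero k w hw
    have ha' : a = coeff 0 a • (1 : MvPolynomial S k) := by
      rw [← totalDegree_zero_iff_isHomogeneous, totalDegree_eq_zero_iff_eq_C] at ha
      rw [← algebraMap_eq, Algebra.algebraMap_eq_smul_one] at ha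
      exact ha
    rw [ha', el_smul1, el_smul2]
    apply Submodule.smul_mem
    apply Submodule.smul_mem
    rw [Submodule.mem_comap, PP_el]
    refine ⟨(Finset.univ.toList.map (fun x => FF.op N x (FF.mev k p))).prod f 0, ?_⟩
    rw [nu_apply]
    congr 1
    ext ω
    exact op_list _ f _ _ (by simp)
  have h := this hz
  rw [Submodule.mem_comap, ← homot0 z hz hd] at h
  exact h

end
end TT

end SecP6f

section SecP6g
universe v
set_option linter.unusedSectionVars false
set_option linter.style.haveILetI false
open MvPolynomial

namespace TT
noncomputable section
open TensorProduct

variable {k G S : Type} [Field k] [Group G] [Fintype G] [MulAction G S] [DecidableEq S] [Fintype S]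
  {p : ℕ} [NeZero p] (D : FF.Dat k G S p) {N : Type v} [AddCommGroup N] [Module k N]
  (rN : Representation k G N)

def rho : Representation k G (JJ k S (Fn S p N)) where
  toFun g := t (AA.pA k S g) (LL.lam k S g) (D.repF rN g)
  map_one' := by rw [map_one, map_one, map_one, t_one]
  map_mul' g h := by rw [map_mul, map_mul, map_mul, t_mul]

theorem rho_def (g : G) : rho D rN g = t (AA.pA k S g) (LL.lam k S g) (D.repF rN g) := rfl

variable (k N) in
def cc (j : ℕ) : Module.End k (JJ k S (Fn S p N)) := t (LinearMap.mulLeft k (esymm S k (j + 1))) 1 1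

theorem rho_DD (g : G) (x : S) : rho D rN g * DD k p N x = DD k p N (g • x) * rho D rN g := by
  rw [rho_def, DD, DD, aa, bb, aa, bb, mul_add, add_mul, t_mul, t_mul, t_mul, t_mul, AA.pA_mX, LL.lam_et, LL.lam_io,
    D.repF_op rN g x _ (FF.mδ_inv k p), D.repF_op rN g x _ (fun _ _ _ => rfl), one_mul, mul_one]

theorem rho_dd (g : G) : rho D rN g * dd k p N = dd k p N * rho D rN g := by
  rw [dd, Finset.mul_sum, Finset.sum_mul]
  simp only [rho_DD]
  exact Equiv.sum_comp (MulAction.toPerm g) (fun x => DD k p N x * rho D rN g)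

theorem pA_esymm (g : G) (j : ℕ) : AA.pA k S g * (LinearMap.mulLeft k (esymm S k j)) =
    (LinearMap.mulLeft k (esymm S k j)) * AA.pA k S g := by
  apply LinearMap.ext; intro u
  simp only [Module.End.mul_apply, AA.pA_apply, LinearMap.mulLeft_apply, map_mul]
  have h : rename (fun x : S => g • x) (esymm S k j) = esymm S k j := rename_esymm S k j (MulAction.toPerm g)
  rw [h]

theorem rho_cc (g : G) (j : ℕ) : rho D rN g * cc k N j = cc k N j * rho D rN g := by
  rw [rho_def, cc, t_mul, t_mul, pA_esymm]
  simp only [one_mul, mul_one]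

theorem pA_hom (g : G) (a : MvPolynomial S k) (α : ℕ) (ha : a.IsHomogeneous α) : (AA.pA k S g a).IsHomogeneous α :=
  ha.rename_isHomogeneous

theorem pA_Ie (g : G) (j : ℕ) (a : MvPolynomial S k) (ha : a ∈ Reg.Ie S k j) : AA.pA k S g a ∈ Reg.Ie S k j := by
  have : Reg.Ie S k j ≤ (Reg.Ie S k j).comap (rename (fun x : S => g • x)).toRingHom := by
    conv_lhs => rw [Reg.Ie]
    apply Ideal.span_le.2
    rintro _ ⟨i, hi, rfl⟩
    change rename (fun x : S => g • x) (esymm S k (i + 1)) ∈ Reg.Ie S k j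
    have h : rename (fun x : S => g • x) (esymm S k (i + 1)) = esymm S k (i + 1) :=
      rename_esymm S k (i + 1) (MulAction.toPerm g)
    rw [h]
    exact Ideal.subset_span ⟨i, hi, rfl⟩
  exact this ha

theorem rho_mem (g : G) (I : Ideal (MvPolynomial S k)) (hI : ∀ a ∈ I, AA.pA k S g a ∈ I) (m : ℕ) (u)
    (hu : u ∈ Gr (Fn S p N) I m) : rho D rN g u ∈ Gr (Fn S p N) I m := by
  refine Gr_map I I _ (fun α i a w f hm ha haI hw => ?_) u hu
  rw [rho_def, t_el]
  exact Gr_el I _ hm (pA_hom g a α ha) (hI a haI) (LL.lam_mem k g i w hw)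

theorem cc_mem (j : ℕ) (I I' : Ideal (MvPolynomial S k)) (hI : ∀ a ∈ I, esymm S k (j + 1) * a ∈ I') (m : ℕ) (u)
    (hu : u ∈ Gr (Fn S p N) I m) : cc k N j u ∈ Gr (Fn S p N) I' (m + 2 * (j + 1)) := by
  refine Gr_map I I' _ (fun α i a w f hm ha haI hw => ?_) u hu
  rw [cc, t_el]
  exact Gr_el (α := j + 1 + α) (i := i) I' _ (by omega) ((Reg.esymm_hom S k _).mul ha) (hI a haI) hw

theorem cc_dd (j : ℕ) : cc k N j * dd k p N (S := S) = dd k p N * cc k N j := by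
  rw [dd, Finset.mul_sum, Finset.sum_mul]
  refine Finset.sum_congr rfl fun x _ => ?_
  rw [cc, DD, aa, bb, mul_add, add_mul, t_mul, t_mul, t_mul, t_mul]
  have : LinearMap.mulLeft k (esymm S k (j + 1)) * AA.mX k x = AA.mX k x * LinearMap.mulLeft k (esymm S k (j + 1)) := by
    apply LinearMap.ext; intro u
    simp only [Module.End.mul_apply, AA.mX_apply, LinearMap.mulLeft_apply]
    ring
  rw [this]
  simp only [one_mul, mul_one]

theorem top_le (m : ℕ) (hm : 2 * (Fintype.card S * Fintype.card S) + Fintype.card S < m) :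
    Gr (Fn S p N) (⊤ : Ideal (MvPolynomial S k)) m ≤ Gr (Fn S p N) (Reg.Ie S k (Fintype.card S)) m := by
  apply Gr_le
  intro α i a w f hm' ha _ hw
  by_cases hi : Fintype.card S < i
  · rw [LL.Eg_top k i hi w hw, el_zero2]; exact zero_mem _
  · exact Gr_el _ _ hm' ha (Reg.top_mem S k α (by omega) a ha) hw

theorem lift_le (j m : ℕ) : Gr (Fn S p N) (Reg.Ie S k (j + 1)) (m + 2 * (j + 1)) ≤
    (Gr (Fn S p N) (⊤ : Ideal (MvPolynomial S k)) m).map (cc k N j) ⊔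
      Gr (Fn S p N) (Reg.Ie S k j) (m + 2 * (j + 1)) := by
  apply Gr_le
  intro α i a w f hm ha haI hw
  rw [Reg.Ie_succ] at haI
  obtain ⟨b, hb, c, hc, rfl⟩ := Submodule.mem_sup.1 haI
  obtain ⟨c, rfl⟩ := Ideal.mem_span_singleton'.1 hc
  have e : b + c * esymm S k (j + 1) = homogeneousComponent α b +
      homogeneousComponent α (esymm S k (j + 1) * c) := by
    rw [← map_add, mul_comm c, homogeneousComponent_of_mem (by rw [mul_comm _ c]; exact ha), if_pos rfl]
  rw [e, el_add1]
  have h1 : el (homogeneousComponent α b) w f ∈ Gr (Fn S p N) (Reg.Ie S k j) (m + 2 * (j + 1)) :=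
    Gr_el _ _ hm (homogeneousComponent_isHomogeneous _ _) (Reg.HI_Ie S k j b hb α) hw
  refine add_mem (Submodule.mem_sup_right h1) (Submodule.mem_sup_left ?_)
  by_cases h : α < j + 1
  · rw [Reg.hc_mul_lt (Reg.esymm_hom S k _) c α h, el_zero1]; exact zero_mem _
  · obtain ⟨β, rfl⟩ : ∃ β, α = j + 1 + β := ⟨α - (j + 1), by omega⟩
    rw [Reg.hc_mul (Reg.esymm_hom S k _)]
    exact ⟨el (homogeneousComponent β c) w f, Gr_el (α := β) (i := i) _ _ (by omega)
      (homogeneousComponent_isHomogeneous _ _) trivial hw, rfl⟩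

theorem rho_theta (u : JJ k S (Fn S p N)) : ∑ g : G, rho D rN g (t 1 1 (D.ΘF N) (rho D rN g⁻¹ u)) = u := by
  have key : ∑ g : G, rho D rN g * t 1 1 (D.ΘF N) * rho D rN g⁻¹ = 1 := by
    have : ∀ g, rho D rN g * t 1 1 (D.ΘF N) * rho D rN g⁻¹ =
        t 1 1 (D.repF rN g * D.ΘF N * D.repF rN g⁻¹) := by
      intro g
      rw [rho_def, rho_def, t_mul, t_mul, mul_one, mul_one, ← map_mul, ← map_mul, mul_inv_cancel, map_one, map_one]
    simp only [this]
    apply el_ext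
    intro a w f
    rw [LinearMap.sum_apply]
    simp only [t_el]
    have h2 := LinearMap.congr_fun (D.ΘF_sum rN) f
    rw [LinearMap.sum_apply] at h2
    change ∑ g : G, el3 a w _ = el3 a w f
    rw [← map_sum, h2]
    rfl
  have := LinearMap.congr_fun key u
  rw [LinearMap.sum_apply] at this
  exact this

def theKP : KP k G (Fintype.card S) (2 * (Fintype.card S * Fintype.card S) + Fintype.card S) N rN where
  J := JJ k S (Fn S p N)
  ρ := rho D rN
  Θ := t 1 1 (D.ΘF N)
  d := dd k p N
  Jg m := Gr (Fn S p N) ⊤ m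
  W j m := Gr (Fn S p N) (Reg.Ie S k j) m
  c := cc k N
  ν := nu k S p N
  ρΘ := rho_theta D rN
  Θc j u := by
    have : t 1 1 (D.ΘF N) * cc k N j = cc k N j * t 1 1 (D.ΘF N) := by
      rw [cc, t_mul, t_mul]; simp only [one_mul, mul_one]
    exact LinearMap.congr_fun this u
  ΘJ m u hu := Gr_t _ _ _ _ hu
  ΘW j m u hu := Gr_t _ _ _ _ hu
  ρd g u := LinearMap.congr_fun (rho_dd D rN g) u
  ρc g j u := LinearMap.congr_fun (rho_cc D rN g j) u
  ρν g u := by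
    rw [nu_apply, rho_def, t_el, AA.pA_apply, map_one, LL.lam_one, D.repF_const]; rfl
  ρJ g m u hu := rho_mem D rN g ⊤ (fun _ _ => trivial) m u hu
  ρW g j m u hu := rho_mem D rN g _ (pA_Ie g j) m u hu
  dd := dd_dd
  d_mem m u hu := dd_mem _ m u hu
  c_mem j m u hu := cc_mem j ⊤ ⊤ (fun _ _ => trivial) m u hu
  cd j u := LinearMap.congr_fun (cc_dd j) u
  W_zero m := by rw [Reg.Ie_zero, Gr_bot]
  W_mono j m := Gr_mono (by rw [Reg.Ie_succ]; exact le_sup_left) m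
  cW j m u hu := cc_mem j _ _ (fun a _ => by
    rw [Reg.Ie_succ]
    exact Ideal.mem_sup_right (Ideal.mul_mem_right _ _ (Ideal.mem_span_singleton_self _))) m u hu
  cWW i j m u hu := cc_mem i _ _ (fun a ha => Ideal.mul_mem_left _ _ ha) m u hu
  dW j m u hu := dd_mem _ m u hu
  reg j m u hj hu h := Gr_reg _ (Reg.HI_Ie S k j) _ (Reg.reg_main S k j hj) m _ u hu h
  top m hm := top_le m hm
  lift j m u hu := by
    obtain ⟨_, ⟨y, hy, rfl⟩, w, hw, e⟩ := Submodule.mem_sup.1 (lift_le j m hu)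
    exact ⟨y, hy, w, hw, e⟩
  exact m u hu h := exact_pos m u hu h
  ν_inj := nu_inj
  ν_mem := nu_mem
  dν := dd_nu
  exact0 u hu h := exact_zero u hu h

end
end TT

namespace HE
noncomputable section
variable {k G S : Type} [Field k] [Group G] [Fintype G] [MulAction G S]
  {p : ℕ}
/-- the representation of a module -/
def repOf (M : Type v) [AddCommGroup M] [Module k M] [Module (MonoidAlgebra k G) M]
    [IsScalarTower k (MonoidAlgebra k G) M] : Representation k G M where
  toFun g := KP.act g
  map_one' := by apply LinearMap.ext; intro x; exact KP.act_one x
  map_mul' g h := by apply LinearMap.ext; intro x; exact KP.act_mul g h x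

theorem proj_of_theta (T : Type v) [AddCommGroup T] [Module k T] [Module (MonoidAlgebra k G) T]
    [IsScalarTower k (MonoidAlgebra k G) T] (Θ : T →ₗ[k] T)
    (hΘ : ∀ u, ∑ g : G, KP.act (k := k) g (Θ (KP.act (k := k) g⁻¹ u)) = u) :
    Module.Projective (MonoidAlgebra k G) T := by
  apply Module.Projective.of_lifting_property''
  intro f hf
  letI : Module k (T →₀ MonoidAlgebra k G) := inferInstance
  obtain ⟨s, hs⟩ := (f.restrictScalars k).exists_rightInverse_of_surjective (LinearMap.range_eq_top.2 hf)
  have hs' : ∀ x, f (s x) = x := fun x => LinearMap.congr_fun hs x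
  refine ⟨KP.avg (G := G) (k := k) LinearMap.id (s ∘ₗ Θ), ?_⟩
  apply LinearMap.ext
  intro x
  rw [LinearMap.comp_apply, KP.avg_apply, map_sum]
  conv_rhs => rw [LinearMap.id_apply, ← hΘ x]
  refine Finset.sum_congr rfl fun g _ => ?_
  change f (MonoidAlgebra.single g (1 : k) • s (Θ _)) = _
  rw [map_smul, hs']
  rfl

/-- wrapper -/
def TF (S : Type) (p : ℕ) (M : Type v) : Type v := (S → ZMod p) → M
instance (M : Type v) [AddCommGroup M] : AddCommGroup (TF S p M) := inferInstanceAs (AddCommGroup ((S → ZMod p) → M))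
instance (M : Type v) [AddCommGroup M] [Module k M] : Module k (TF S p M) :=
  inferInstanceAs (Module k ((S → ZMod p) → M))

theorem hemb (D : FF.Dat k G S p) (M : Type v) [AddCommGroup M] [Module (MonoidAlgebra k G) M] :
    ∃ (T : Type v) (_ : AddCommGroup T) (_ : Module (MonoidAlgebra k G) T)
      (_ : Module.Projective (MonoidAlgebra k G) T) (i : M →ₗ[MonoidAlgebra k G] T), Function.Injective i := by
  letI : Module k M := Module.compHom M (algebraMap k (MonoidAlgebra k G))
  haveI : IsScalarTower k (MonoidAlgebra k G) M := IsScalarTower.of_algebraMap_smul fun r x => rfl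
  let ρ : Representation k G (TF S p M) := D.repF (repOf (k := k) (G := G) M)
  letI := KP.modOf ρ
  haveI := KP.modOf_tower ρ
  have hact : ∀ g (f : TF S p M), KP.act (k := k) g f = ρ g f := by
    intro g f
    change MonoidAlgebra.single g (1 : k) • f = _
    rw [KP.modOf_single, one_smul]
  have hpr : Module.Projective (MonoidAlgebra k G) (TF S p M) := by
    let Θ : TF S p M →ₗ[k] TF S p M := D.ΘF M
    apply proj_of_theta (k := k) (TF S p M) Θ
    intro u
    simp only [hact]
    have : ∀ u' : (S → ZMod p) → M, ∑ g : G, D.repF (repOf (k := k) (G := G) M) g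
        (D.ΘF M (D.repF (repOf (k := k) (G := G) M) g⁻¹ u')) = u' := by
      intro u'
      have := LinearMap.congr_fun (D.ΘF_sum (repOf (k := k) (G := G) M)) u'
      rw [LinearMap.sum_apply] at this
      exact this
    exact this u
  let i0 : M →ₗ[k] TF S p M := (LinearMap.pi fun _ => LinearMap.id : M →ₗ[k] ((S → ZMod p) → M))
  refine ⟨TF S p M, inferInstance, inferInstance, hpr,
    MonoidAlgebra.equivariantOfLinearOfComm i0 (by
      intro g x
      rw [KP.modOf_single, one_smul]; rfl), ?_⟩
  intro x y h
  exact congrFun h (0 : S → ZMod p)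

theorem hK (D : FF.Dat k G S p) [DecidableEq S] [Fintype S] [NeZero p] (N : Type v) [AddCommGroup N] [Module (MonoidAlgebra k G) N] :
    Nonempty (Pkg.{0, v} (MonoidAlgebra k G) (Fintype.card S)
      (2 * (Fintype.card S * Fintype.card S) + Fintype.card S) N) := by
  letI : Module k N := Module.compHom N (algebraMap k (MonoidAlgebra k G))
  haveI : IsScalarTower k (MonoidAlgebra k G) N := IsScalarTower.of_algebraMap_smul fun r x => rfl
  exact (TT.theKP D (repOf (k := k) (G := G) N)).toPkg fun g x => rfl

end
end HE

end SecP6g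

section SecP7
set_option linter.unusedSectionVars false

namespace DE
noncomputable section
variable {k G : Type} [Field k] [Group G] [Fintype G]

theorem theta_exists (Ω : Type) [MulAction G Ω]
    (h : ∀ ω : Ω, (Nat.card (MulAction.stabilizer G ω) : k) ≠ 0) :
    ∃ θ : Ω → k, ∀ ω, ∑ g : G, θ (g⁻¹ • ω) = 1 := by
  classical
  let r : Ω → Ω := fun ω => (Quotient.mk (MulAction.orbitRel G Ω) ω).out
  have hr : ∀ ω, ∃ g : G, g • ω = r ω := by
    intro ω
    have : (MulAction.orbitRel G Ω).r (r ω) ω := Quotient.mk_out (s := MulAction.orbitRel G Ω) ω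
    exact this
  have hr2 : ∀ (g : G) ω, r (g • ω) = r ω := by
    intro g ω
    have : Quotient.mk (MulAction.orbitRel G Ω) (g • ω) = Quotient.mk (MulAction.orbitRel G Ω) ω :=
      Quotient.sound (s := MulAction.orbitRel G Ω) ⟨g, rfl⟩
    simp only [r, this]
  refine ⟨fun ω => if ω = r ω then (Nat.card (MulAction.stabilizer G ω) : k)⁻¹ else 0, fun ω => ?_⟩
  obtain ⟨g₀, hg₀⟩ := hr ω
  have e : ∀ g : G, (if g⁻¹ • ω = r (g⁻¹ • ω) then (Nat.card (MulAction.stabilizer G (g⁻¹ • ω)) : k)⁻¹ else 0) =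
      if (g⁻¹ * g₀⁻¹) ∈ MulAction.stabilizer G (r ω) then (Nat.card (MulAction.stabilizer G (r ω)) : k)⁻¹ else 0 := by
    intro g
    rw [hr2]
    have : (g⁻¹ * g₀⁻¹) ∈ MulAction.stabilizer G (r ω) ↔ g⁻¹ • ω = r ω := by
      rw [MulAction.mem_stabilizer_iff, ← hg₀, mul_smul, inv_smul_smul, hg₀]
    simp only [this]
    split_ifs with h1
    · rw [h1]
    · rfl
  rw [Finset.sum_congr rfl fun g _ => e g]
  let q : G → k := fun g => if g ∈ MulAction.stabilizer G (r ω) then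
    (Nat.card (MulAction.stabilizer G (r ω)) : k)⁻¹ else 0
  have e2 := Equiv.sum_comp ((Equiv.inv G).trans (Equiv.mulRight g₀⁻¹)) q
  refine Eq.trans e2 ?_
  simp only [q]
  rw [← Finset.sum_filter, Finset.sum_const, nsmul_eq_mul]
  have : ((Finset.univ.filter (fun g => g ∈ MulAction.stabilizer G (r ω))).card) =
      Nat.card (MulAction.stabilizer G (r ω)) := by
    rw [Nat.card_eq_fintype_card]
    exact (Fintype.card_subtype _).symm
  rw [this, mul_inv_cancel₀ (h _)]

theorem dat_of_coc (S : Type) [MulAction G S] (p : ℕ) (κ : G → S → ZMod p)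
    (coc : ∀ g h x, κ (g * h) x = κ g (h • x) + κ h x)
    (hst : ∀ ω : S → ZMod p, ∀ H : Subgroup G, (∀ g ∈ H, ∀ x, ω (g⁻¹ • x) + κ g (g⁻¹ • x) = ω x) →
      (Nat.card H : k) ≠ 0) : Nonempty (FF.Dat k G S p) := by
  have κ1 : ∀ x, κ 1 x = 0 := by
    intro x
    have := coc 1 1 x
    simpa using this
  letI : MulAction G (S → ZMod p) :=
    { smul := fun g ω x => ω (g⁻¹ • x) + κ g (g⁻¹ • x)
      one_smul := fun ω => by
        funext x
        change ω ((1 : G)⁻¹ • x) + κ 1 ((1 : G)⁻¹ • x) = ω x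
        simp [κ1]
      mul_smul := fun g h ω => by
        funext x
        change ω ((g * h)⁻¹ • x) + κ (g * h) ((g * h)⁻¹ • x) =
          (ω (h⁻¹ • g⁻¹ • x) + κ h (h⁻¹ • g⁻¹ • x)) + κ g (g⁻¹ • x)
        simp only [mul_inv_rev, mul_smul, coc, smul_inv_smul]
        ring }
  obtain ⟨θ, hθ⟩ := theta_exists (k := k) (G := G) (S → ZMod p) (fun ω => hst ω _ (by
    intro g hg x
    have := MulAction.mem_stabilizer_iff.1 hg
    exact congrFun this x))
  refine ⟨⟨κ, coc, θ, fun ω => ?_⟩⟩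
  refine Eq.trans (Finset.sum_congr rfl fun g _ => ?_) (hθ ω)
  congr 1
  funext x
  change _ = ω (g⁻¹⁻¹ • x) + κ g⁻¹ (g⁻¹⁻¹ • x)
  rw [inv_inv]

theorem log_exists (p : ℕ) (h : G) (hp : orderOf h = p) :
    ∃ φ : Subgroup.zpowers h →* Multiplicative (ZMod p), Function.Injective φ := by
  have hc : Nat.card (Subgroup.zpowers h) = p := by rw [Nat.card_zpowers, hp]
  subst hc
  exact ⟨(zmodCyclicMulEquiv (inferInstance : IsCyclic (Subgroup.zpowers h))).symm.toMonoidHom,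
    MulEquiv.injective _⟩

theorem out_mem (H : Subgroup G) (g : G) (x : G ⧸ H) : (g • x).out⁻¹ * (g * x.out) ∈ H := by
  rw [← QuotientGroup.eq, QuotientGroup.out_eq']
  change g • x = g • ((x.out : G) : G ⧸ H)
  rw [QuotientGroup.out_eq']

theorem dat_p (p : ℕ) [Fact p.Prime] [CharP k p] :
    ∃ (S : Type) (_ : Finite S) (_ : MulAction G S), Nonempty (FF.Dat k G S p) := by
  classical
  choose φ hφ using fun h : {h : G // orderOf h = p} => log_exists p h.1 h.2
  let S : Type := Σ h : {h : G // orderOf h = p}, G ⧸ Subgroup.zpowers h.1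
  let κ : G → S → ZMod p := fun g x => (φ x.1 ⟨_, out_mem _ g x.2⟩).toAdd
  refine ⟨S, inferInstance, inferInstance, dat_of_coc S p κ ?_ ?_⟩
  · rintro g h ⟨y, x⟩
    change (φ y ⟨_, out_mem _ (g * h) x⟩).toAdd = (φ y ⟨_, out_mem _ g (h • x)⟩).toAdd + (φ y ⟨_, out_mem _ h x⟩).toAdd
    rw [← toAdd_mul, ← map_mul]
    congr 2
    apply Subtype.ext
    simp only [Subgroup.coe_mul, mul_smul]
    group
  · intro ω H hH h0
    rw [CharP.cast_eq_zero_iff k p] at h0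
    obtain ⟨⟨g, hgH⟩, hg⟩ := exists_prime_orderOf_dvd_card' p h0
    have hg' : orderOf g = p := by rw [← hg, Subgroup.orderOf_mk]
    let y : {h : G // orderOf h = p} := ⟨g, hg'⟩
    let x : G ⧸ Subgroup.zpowers g := ((1 : G) : G ⧸ Subgroup.zpowers g)
    have hx : g⁻¹ • x = x := by
      change ((g⁻¹ * 1 : G) : G ⧸ Subgroup.zpowers g) = ((1 : G) : G ⧸ Subgroup.zpowers g)
      rw [QuotientGroup.eq]
      simp
    have hfix := hH g hgH (⟨y, x⟩ : S)
    have e : g⁻¹ • (⟨y, x⟩ : S) = ⟨y, x⟩ := by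
      change (⟨y, g⁻¹ • x⟩ : S) = ⟨y, x⟩
      rw [hx]
    rw [e, add_eq_left] at hfix
    have h1 : φ y ⟨_, out_mem _ g x⟩ = 1 := hfix
    rw [map_eq_one_iff _ (hφ y)] at h1
    have h2 : (g • x).out⁻¹ * (g * x.out) = 1 := congrArg Subtype.val h1
    have h3 : g • x = x := by rw [inv_smul_eq_iff] at hx; exact hx.symm
    rw [h3, inv_mul_eq_one] at h2
    have h4 : g = 1 := by
      have := h2.symm
      rwa [mul_eq_right] at this
    have h5 := (Fact.out : p.Prime).one_lt
    rw [h4, orderOf_one] at hg'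
    omega

theorem dat_exists (k G : Type) [Field k] [Group G] [Fintype G] :
    ∃ (p : ℕ) (_ : NeZero p) (S : Type) (_ : Finite S) (_ : MulAction G S), Nonempty (FF.Dat k G S p) := by
  obtain ⟨p, hp⟩ := CharP.exists k
  rcases CharP.char_is_prime_or_zero k p with h | h
  · haveI : Fact p.Prime := ⟨h⟩
    obtain ⟨S, h1, h2, h3⟩ := dat_p (k := k) (G := G) p
    exact ⟨p, ⟨h.ne_zero⟩, S, h1, h2, h3⟩
  · subst h
    haveI := CharP.charP_to_charZero k
    let act : MulAction G Empty := { smul := fun _ x => x, one_smul := fun x => rfl, mul_smul := fun _ _ x => rfl }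
    refine ⟨1, inferInstance, Empty, inferInstance, act, ?_⟩
    exact @dat_of_coc k G _ _ _ Empty act 1 (fun _ _ => 0) (fun _ _ x => x.elim) (fun ω H _ => by
      exact_mod_cast Nat.card_pos.ne')
end
end DE

end SecP7

open CategoryTheory

/-- For a finite group `G` and a field `k` there is a positive integer `r`
(depending only on `G` and `k`) such that for all `kG`-modules `M`, `N`: if
`Ext^n_{kG}(M, N) = 0` for `r` consecutive positive values of `n`, then
`Ext^n_{kG}(M, N) = 0` for all `n > 0`. -/
theorem statement4 (k G : Type) [Field k] [Group G] [Finite G] :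
    ∃ r : ℕ, 0 < r ∧
      ∀ (M N : Type v) [AddCommGroup M] [Module (MonoidAlgebra k G) M]
        [AddCommGroup N] [Module (MonoidAlgebra k G) N],
        (∃ n₀ : ℕ, 0 < n₀ ∧ ∀ i < r,
          Subsingleton (((Ext ℤ (ModuleCat.{v} (MonoidAlgebra k G)) (n₀ + i)).obj
            (Opposite.op (ModuleCat.of (MonoidAlgebra k G) M))).obj
              (ModuleCat.of (MonoidAlgebra k G) N))) →
        ∀ n : ℕ, 0 < n →
          Subsingleton (((Ext ℤ (ModuleCat.{v} (MonoidAlgebra k G)) n).obj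
            (Opposite.op (ModuleCat.of (MonoidAlgebra k G) M))).obj
              (ModuleCat.of (MonoidAlgebra k G) N)) := by
  classical
  haveI := Fintype.ofFinite G
  obtain ⟨p, _, S, _, _, ⟨D⟩⟩ := DE.dat_exists k G
  haveI := Fintype.ofFinite S
  obtain ⟨r, hr, H⟩ := resl_main.{0, v} (MonoidAlgebra k G) (Fintype.card S) _
    (fun M => HE.hemb D M) (fun N => HE.hK D N)
  refine ⟨r, hr, ?_⟩
  intro M N _ _ _ _ hex n hn
  obtain ⟨n₀, hn₀, h⟩ := hex
  obtain ⟨Q, hQ⟩ := ext_bridge (MonoidAlgebra k G) M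
  obtain ⟨b, rfl⟩ : ∃ b, n = b + 1 := ⟨n - 1, by omega⟩
  obtain ⟨a, rfl⟩ : ∃ a, n₀ = a + 1 := ⟨n₀ - 1, by omega⟩
  refine (hQ N b).2 (H N Q ⟨a, fun i hi => (hQ N (a + i)).1 ?_⟩ b)
  have := h i hi
  rwa [show a + 1 + i = a + i + 1 by omega] at this
end

section
/- Let K be a field of characteristic p > 0 and B = K[t]/(t^p). Let 0 → X → Y → Z → 0 be a short exact sequence of finite dimensional B-modules with Y projective. If dim_K Hom_B(X, K) − dim_K Hom_B(Y, K) + dim_K Hom_B(Z, K) = 0, where K = B/(t) is the one-dimensional B-module with t acting as 0, then the sequence splits and Z is a projective B-module. -/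
open Polynomial

/-- The composition length of a module (the length of a composition series,
zero if none exists). -/
noncomputable def compLength (R : Type) [Ring R] (M : Type) [AddCommGroup M] [Module R M] : ℕ := by
  classical
  exact if h : ∃ s : CompositionSeries (Submodule R M), s.head = ⊥ ∧ s.last = ⊤ then
    h.choose.length else 0

/-- The truncated polynomial algebra `B = K[t]/(t^p)`. -/
noncomputable abbrev Bp (K : Type) [Field K] (p : ℕ) : Type :=
  AdjoinRoot ((X : K[X]) ^ p)

/-- The algebra map `B → K` sending `t` to `0`, exhibiting `K = B/(t)` as a `B`-module. -/
noncomputable def resB (K : Type) [Field K] (p : ℕ) (hp : p ≠ 0) : Bp K p →ₐ[K] K :=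
  AdjoinRoot.liftAlgHom _ (Algebra.ofId K K) 0 (by simp [zero_pow hp])

theorem aux_ext {B K : Type} [CommRing B] [Field K] [Module B K] [SMulCommClass B K K]
    (X Y Z : Type) [AddCommGroup X] [Module B X]
    [AddCommGroup Y] [Module B Y] [AddCommGroup Z] [Module B Z]
    [Module.Finite B X] [Module.Finite B Y]
    (f : X →ₗ[B] Y) (g : Y →ₗ[B] Z)
    (hfg : Function.Exact f g) (hg : Function.Surjective g)
    (hdim : Module.finrank K (X →ₗ[B] K) + Module.finrank K (Z →ₗ[B] K) =
        Module.finrank K (Y →ₗ[B] K)) (φ : X →ₗ[B] K) : ∃ ψ : Y →ₗ[B] K, ψ.comp f = φ := by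
  have fin : ∀ (M : Type) [AddCommGroup M] [Module B M] [Module.Finite B M],
      Module.Finite K (M →ₗ[B] K) := by
    intro M _ _ _
    obtain ⟨n, s, hs⟩ := Module.Finite.exists_fin (R := B) (M := M)
    let ev : (M →ₗ[B] K) →ₗ[K] (Fin n → K) :=
      { toFun := fun u i => u (s i)
        map_add' := fun _ _ => rfl
        map_smul' := fun _ _ => rfl }
    refine Module.Finite.of_injective ev ?_
    intro u v h
    refine LinearMap.ext_on_range hs (fun i => ?_)
    exact congrFun h i
  haveI := fin X
  haveI := fin Y
  let F : (Y →ₗ[B] K) →ₗ[K] (X →ₗ[B] K) :=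
    { toFun := fun u => u.comp f
      map_add' := fun _ _ => rfl
      map_smul' := fun _ _ => rfl }
  let G : (Z →ₗ[B] K) →ₗ[K] (Y →ₗ[B] K) :=
    { toFun := fun u => u.comp g
      map_add' := fun _ _ => rfl
      map_smul' := fun _ _ => rfl }
  have hG : Function.Injective G := by
    intro u v h
    ext z
    obtain ⟨y, rfl⟩ := hg z
    exact LinearMap.congr_fun h y
  have hker : LinearMap.ker F = LinearMap.range G := by
    ext u
    constructor
    · intro hu
      have hu' : LinearMap.ker g ≤ LinearMap.ker u := by
        intro y hy
        obtain ⟨x, rfl⟩ := (hfg y).1 hy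
        exact LinearMap.congr_fun (show u.comp f = 0 from hu) x
      let e := g.quotKerEquivOfSurjective hg
      refine ⟨((LinearMap.ker g).liftQ u hu').comp e.symm.toLinearMap, ?_⟩
      ext y
      have : e.symm (g y) = (LinearMap.ker g).mkQ y := by
        rw [LinearEquiv.symm_apply_eq]; rfl
      show (LinearMap.ker g).liftQ u hu' (e.symm (g y)) = u y
      rw [this]
      simp
    · rintro ⟨v, rfl⟩
      show (v.comp g).comp f = 0
      ext x
      simp [hfg.apply_apply_eq_zero]
  have h1 := LinearMap.finrank_range_add_finrank_ker F
  rw [hker, LinearMap.finrank_range_of_inj hG] at h1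
  have h2 : LinearMap.range F = ⊤ := Submodule.eq_top_of_finrank_eq (by omega)
  exact LinearMap.range_eq_top.1 h2 φ

open TensorProduct in
theorem aux_free {B K : Type} [CommRing B] [IsLocalRing B] [IsNoetherianRing B]
    [Field K] [Module B K] [SMulCommClass B K K]
    (r : B →+* K) [IsLocalHom r] (hr : ∀ b x, b • x = r b * x)
    (X Y Z : Type) [AddCommGroup X] [Module B X]
    [AddCommGroup Y] [Module B Y] [AddCommGroup Z] [Module B Z]
    [Module.Finite B X] [Module.Finite B Y] [Module.Finite B Z] [Module.Projective B Y]
    (f : X →ₗ[B] Y) (g : Y →ₗ[B] Z)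
    (hfg : Function.Exact f g) (hg : Function.Surjective g)
    (hdim : Module.finrank K (X →ₗ[B] K) + Module.finrank K (Z →ₗ[B] K) =
        Module.finrank K (Y →ₗ[B] K)) : Module.Free B Z := by
  haveI : Module.Free B Y := Module.free_of_flat_of_isLocalRing
  haveI : Module.FinitePresentation B Z := Module.finitePresentation_of_finite B Z
  let k := IsLocalRing.ResidueField B
  let j : k →+* K := IsLocalRing.ResidueField.lift r
  have hj : ∀ (b : B) (c : k), j (b • c) = b • j c := by
    intro b c
    rw [hr, Algebra.smul_def, map_mul]
    rfl
  let jl : k →ₗ[B] K := { toFun := j, map_add' := map_add j, map_smul' := hj }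
  refine Module.free_of_lTensor_residueField_injective f g hg hfg ?_
  rw [injective_iff_map_eq_zero]
  intro a ha
  by_contra hne
  obtain ⟨φ, hφ⟩ : ∃ φ : Module.Dual k (k ⊗[B] X), φ a ≠ 0 := by
    by_contra! h
    exact hne ((Module.forall_dual_apply_eq_zero_iff k a).1 h)
  let φ0 : X →ₗ[B] K := jl.comp ((φ.restrictScalars B).comp (TensorProduct.mk B k X 1))
  obtain ⟨ψ, hψ⟩ := aux_ext X Y Z f g hfg hg hdim φ0
  let L : k ⊗[B] Y →ₗ[B] K := TensorProduct.lift (LinearMap.mk₂ B (fun c y => j c * ψ y)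
    (fun _ _ _ => by simp [add_mul]) (fun b c y => by rw [hj, hr, hr, mul_assoc])
    (fun _ _ _ => by simp [mul_add]) (fun b c y => by rw [map_smul, hr, hr]; ring))
  have key : L.comp (f.lTensor k) = jl.comp (φ.restrictScalars B) := by
    ext c x
    have h1 : ψ (f x) = j (φ (1 ⊗ₜ x)) := LinearMap.congr_fun hψ x
    have h2 : c ⊗ₜ[B] x = c • ((1 : k) ⊗ₜ[B] x) := by
      rw [TensorProduct.smul_tmul']; simp
    show j c * ψ (f x) = j (φ (c ⊗ₜ x))
    rw [h1, h2, map_smul, smul_eq_mul, map_mul]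
  have h3 := LinearMap.congr_fun key a
  have h4 : j (φ a) = 0 := by
    refine Eq.trans h3.symm ?_
    show L (f.lTensor k a) = 0
    erw [ha]
    simp
  exact hφ ((map_eq_zero j).1 h4)

theorem aux_local (K : Type) [Field K] (p : ℕ) (hp : p ≠ 0) :
    IsLocalHom (resB K p hp).toRingHom := by
  constructor
  intro b hb
  obtain ⟨q, rfl⟩ := AdjoinRoot.mk_surjective b
  have h0 : resB K p hp (AdjoinRoot.mk _ q) = q.coeff 0 := by
    simp [resB]
  have hb' : IsUnit (q.coeff 0) := by
    rw [← h0]; exact hb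
  have e : AdjoinRoot.mk ((X : K[X]) ^ p) q =
      AdjoinRoot.mk _ (C (q.coeff 0)) + AdjoinRoot.mk _ (X * q.divX) := by
    rw [← map_add, add_comm, Polynomial.X_mul_divX_add]
  rw [e]
  refine IsNilpotent.isUnit_add_left_of_commute ?_ ?_ (Commute.all _ _)
  · refine ⟨p, ?_⟩
    rw [← map_pow, mul_pow, map_mul, AdjoinRoot.mk_self, zero_mul]
  · exact (hb'.map C).map _

/-- Over `B = K[t]/(t^p)`, a short exact sequence
`0 → X → Y → Z → 0` of finite dimensional `B`-modules with `Y` projective splits,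
and `Z` is projective, as soon as
`dim_K Hom_B(X,K) - dim_K Hom_B(Y,K) + dim_K Hom_B(Z,K) = 0`. -/
theorem statement11 (K : Type) [Field K] (p : ℕ) [CharP K p] (hp : 0 < p)
    (X Y Z : Type) [AddCommGroup X] [Module (Bp K p) X]
    [AddCommGroup Y] [Module (Bp K p) Y] [AddCommGroup Z] [Module (Bp K p) Z]
    (hX : Module.Finite (Bp K p) X) (hY : Module.Finite (Bp K p) Y)
    (hZ : Module.Finite (Bp K p) Z)
    (hYproj : Module.Projective (Bp K p) Y)
    (f : X →ₗ[Bp K p] Y) (g : Y →ₗ[Bp K p] Z)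
    (hf : Function.Injective f) (hfg : Function.Exact f g) (hg : Function.Surjective g)
    (hdim :
      letI : Module (Bp K p) K := Module.compHom K (resB K p hp.ne').toRingHom
      haveI : SMulCommClass (Bp K p) K K :=
        ⟨fun b c x => by
          show resB K p hp.ne' b * (c * x) = c * (resB K p hp.ne' b * x); ring⟩
      Module.finrank K (X →ₗ[Bp K p] K) + Module.finrank K (Z →ₗ[Bp K p] K) =
        Module.finrank K (Y →ₗ[Bp K p] K)) :
    (∃ s : Z →ₗ[Bp K p] Y, g.comp s = LinearMap.id) ∧
    Module.Projective (Bp K p) Z := by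
  letI : Module (Bp K p) K := Module.compHom K (resB K p hp.ne').toRingHom
  haveI : SMulCommClass (Bp K p) K K :=
    ⟨fun b c x => by
      show resB K p hp.ne' b * (c * x) = c * (resB K p hp.ne' b * x); ring⟩
  haveI := aux_local K p hp.ne'
  haveI : IsLocalRing (Bp K p) := RingHom.domain_isLocalRing (resB K p hp.ne').toRingHom
  haveI : IsNoetherianRing (Bp K p) :=
    isNoetherianRing_of_surjective K[X] _ (AdjoinRoot.mk _) AdjoinRoot.mk_surjective
  haveI : Module.Free (Bp K p) Z :=
    aux_free (resB K p hp.ne').toRingHom (fun _ _ => rfl) X Y Z f g hfg hg hdim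
  haveI : Module.Projective (Bp K p) Z := inferInstance
  exact ⟨Module.projective_lifting_property g LinearMap.id hg, this⟩
end

section
/- Let X be a T₀ topological space and P a set of closed subsets of X that contains the closure of {x} for every x ∈ X, partially ordered by inclusion. Call C ∈ P join irreducible if C is not equal to the union of the members of P that are properly contained in C. Then the assignment x ↦ closure({x}) is a bijection from X onto the set of join irreducible elements of P. -/
/-- A member `C` of a family `P` of sets is join irreducible if it is not the union of
the members of `P` properly contained in it. -/
def JoinIrredMem {X : Type} (P : Set (Set X)) (C : Set X) : Prop :=
  C ∈ P ∧ C ≠ ⋃₀ {D | D ∈ P ∧ D ⊂ C}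

/-- For a T₀ space `X` and a set `P` of closed subsets of `X` containing
all point closures, `x ↦ closure {x}` is a bijection from `X` onto the set of join
irreducible elements of `P`. -/
theorem statement12 (X : Type) [TopologicalSpace X] [T0Space X]
    (P : Set (Set X)) (hP : ∀ C ∈ P, IsClosed C)
    (hpt : ∀ x : X, closure {x} ∈ P) :
    Set.BijOn (fun x : X => closure {x}) Set.univ {C | JoinIrredMem P C} := by
  refine ⟨?_, ?_, ?_⟩
  · intro x _
    refine ⟨hpt x, fun h => ?_⟩
    have hx : x ∈ closure ({x} : Set X) := subset_closure rfl
    have hx2 : x ∈ ⋃₀ {D | D ∈ P ∧ D ⊂ closure ({x} : Set X)} := h ▸ hx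
    obtain ⟨D, ⟨hD, hlt⟩, hxD⟩ := hx2
    exact hlt.2 (closure_minimal (Set.singleton_subset_iff.2 hxD) (hP D hD))
  · intro x _ y _ h
    exact (inseparable_iff_closure_eq.2 h).eq
  · rintro C ⟨hC, hne⟩
    by_contra hcon
    apply hne
    apply Set.Subset.antisymm
    · intro x hx
      have hsub : closure ({x} : Set X) ⊆ C :=
        closure_minimal (Set.singleton_subset_iff.2 hx) (hP C hC)
      refine ⟨closure {x}, ⟨hpt x, hsub, fun h => ?_⟩, subset_closure rfl⟩
      exact hcon ⟨x, trivial, Set.Subset.antisymm hsub h⟩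
    · rintro x ⟨D, ⟨_, hlt⟩, hxD⟩
      exact hlt.1 hxD
end

section
/- Let k be a field of characteristic p > 0, G a finite group, K/k a field extension, B = K[t]/(t^p), and α : B → KG a K-algebra homomorphism with KG flat as a B-module via α. Then the kG-module Δ obtained by restricting the KG-module Hom_B(KG, K) along kG → KG is endofinite: Δ has finite composition length as a module over its endomorphism ring End_{kG}(Δ). -/
open Polynomial

/-- Base change of a `kG`-module `M` to a representation of `G` over `K`. -/
noncomputable def rhoK (k K G : Type) [Field k] [Field K] [Algebra k K] [Group G]
    (M : Type) [AddCommGroup M] [Module (MonoidAlgebra k G) M] :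
    Representation K G
      (TensorProduct k K (RestrictScalars k (MonoidAlgebra k G) M)) :=
  MonoidHom.comp
    (Module.End.baseChangeHom k K
      (RestrictScalars k (MonoidAlgebra k G) M)).toRingHom.toMonoidHom
    (Representation.ofModule M)

/-- The base-changed module `M ⊗_k K`, as a module over `KG = MonoidAlgebra K G`. -/
noncomputable abbrev MK (k K G : Type) [Field k] [Field K] [Algebra k K] [Group G]
    (M : Type) [AddCommGroup M] [Module (MonoidAlgebra k G) M] : Type :=
  (rhoK k K G M).asModule

/-- `χ_α(M) = dim_K Hom_B(α^*(M ⊗_k K), K)`, where `α^*` is restriction along `α`. -/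
noncomputable def chiAlpha (k K G : Type) [Field k] [Field K] [Algebra k K] [Group G]
    (p : ℕ) (hp : p ≠ 0) (α : Bp K p →ₐ[K] MonoidAlgebra K G)
    (M : Type) [AddCommGroup M] [Module (MonoidAlgebra k G) M] : ℕ :=
  letI : Module (Bp K p) (MK k K G M) := Module.compHom _ α.toRingHom
  letI : Module (Bp K p) K := Module.compHom K (resB K p hp).toRingHom
  haveI : SMulCommClass (Bp K p) K K :=
    ⟨fun b c x => by
      show resB K p hp b * (c * x) = c * (resB K p hp b * x); ring⟩
  Module.finrank K ((MK k K G M) →ₗ[Bp K p] K)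

/-- `M` belongs to `Thick(α)`: `M` is finite dimensional and `α^*(M ⊗_k K)` is a
projective `B`-module. -/
def MemThick (k K G : Type) [Field k] [Field K] [Algebra k K] [Group G]
    (p : ℕ) (α : Bp K p →ₐ[K] MonoidAlgebra K G)
    (M : Type) [AddCommGroup M] [Module (MonoidAlgebra k G) M] : Prop :=
  Module.Finite (MonoidAlgebra k G) M ∧
  (letI : Module (Bp K p) (MK k K G M) := Module.compHom _ α.toRingHom
   Module.Projective (Bp K p) (MK k K G M))

section
variable (K G : Type) [Field K] [Group G] (p : ℕ) (hp : p ≠ 0)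
  (α : Bp K p →ₐ[K] MonoidAlgebra K G)

/-- The coinduced module `Hom_B(KG, K)` (as a type). -/
noncomputable def CoInd : Type :=
  letI : Module (Bp K p) (MonoidAlgebra K G) := Module.compHom _ α.toRingHom
  letI : Module (Bp K p) K := Module.compHom K (resB K p hp).toRingHom
  MonoidAlgebra K G →ₗ[Bp K p] K

noncomputable instance : AddCommGroup (CoInd K G p hp α) :=
  letI : Module (Bp K p) (MonoidAlgebra K G) := Module.compHom _ α.toRingHom
  letI : Module (Bp K p) K := Module.compHom K (resB K p hp).toRingHom
  (inferInstance : AddCommGroup (MonoidAlgebra K G →ₗ[Bp K p] K))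

noncomputable instance : Module (Bp K p) (CoInd K G p hp α) :=
  letI : Module (Bp K p) (MonoidAlgebra K G) := Module.compHom _ α.toRingHom
  letI : Module (Bp K p) K := Module.compHom K (resB K p hp).toRingHom
  (inferInstance : Module (Bp K p) (MonoidAlgebra K G →ₗ[Bp K p] K))

end

section
variable (K G : Type) [Field K] [Group G] (p : ℕ) (hp : p ≠ 0)
  (α : Bp K p →ₐ[K] MonoidAlgebra K G)

/-- Right multiplication by `x` on `KG`, as a `B`-linear map. -/
noncomputable def rmulB (x : MonoidAlgebra K G) :
    letI : Module (Bp K p) (MonoidAlgebra K G) := Module.compHom _ α.toRingHom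
    MonoidAlgebra K G →ₗ[Bp K p] MonoidAlgebra K G :=
  letI : Module (Bp K p) (MonoidAlgebra K G) := Module.compHom _ α.toRingHom
  { toFun := fun y => y * x
    map_add' := fun a b => add_mul a b x
    map_smul' := fun b y => by
      show (α b * y) * x = α b * (y * x)
      rw [mul_assoc] }

/-- The action of `KG` on `Hom_B(KG, K)` given by `(x · f) y = f (y x)`,
as a ring homomorphism into the `B`-linear endomorphisms. -/
noncomputable def coindHom :
    MonoidAlgebra K G →+* Module.End (Bp K p) (CoInd K G p hp α) where
  toFun x :=
    letI : Module (Bp K p) (MonoidAlgebra K G) := Module.compHom _ α.toRingHom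
    letI : Module (Bp K p) K := Module.compHom K (resB K p hp).toRingHom
    { toFun := fun f =>
        (show MonoidAlgebra K G →ₗ[Bp K p] K from f).comp (rmulB K G p α x)
      map_add' := fun f g => LinearMap.add_comp _ _ _
      map_smul' := fun b f => LinearMap.smul_comp _ _ _ }
  map_one' := by
    letI : Module (Bp K p) (MonoidAlgebra K G) := Module.compHom _ α.toRingHom
    letI : Module (Bp K p) K := Module.compHom K (resB K p hp).toRingHom
    refine LinearMap.ext fun f => LinearMap.ext fun y => ?_
    show (show MonoidAlgebra K G →ₗ[Bp K p] K from f) (y * 1) =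
      (show MonoidAlgebra K G →ₗ[Bp K p] K from f) y
    rw [mul_one]
  map_mul' x₁ x₂ := by
    letI : Module (Bp K p) (MonoidAlgebra K G) := Module.compHom _ α.toRingHom
    letI : Module (Bp K p) K := Module.compHom K (resB K p hp).toRingHom
    refine LinearMap.ext fun f => LinearMap.ext fun y => ?_
    show (show MonoidAlgebra K G →ₗ[Bp K p] K from f) (y * (x₁ * x₂)) =
      (show MonoidAlgebra K G →ₗ[Bp K p] K from f) ((y * x₁) * x₂)
    rw [mul_assoc]
  map_zero' := by
    letI : Module (Bp K p) (MonoidAlgebra K G) := Module.compHom _ α.toRingHom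
    letI : Module (Bp K p) K := Module.compHom K (resB K p hp).toRingHom
    refine LinearMap.ext fun f => LinearMap.ext fun y => ?_
    show (show MonoidAlgebra K G →ₗ[Bp K p] K from f) (y * 0) = 0
    rw [mul_zero, map_zero]
  map_add' x₁ x₂ := by
    letI : Module (Bp K p) (MonoidAlgebra K G) := Module.compHom _ α.toRingHom
    letI : Module (Bp K p) K := Module.compHom K (resB K p hp).toRingHom
    refine LinearMap.ext fun f => LinearMap.ext fun y => ?_
    show (show MonoidAlgebra K G →ₗ[Bp K p] K from f) (y * (x₁ + x₂)) =
      (show MonoidAlgebra K G →ₗ[Bp K p] K from f) (y * x₁) +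
      (show MonoidAlgebra K G →ₗ[Bp K p] K from f) (y * x₂)
    rw [mul_add, map_add]

/-- The `KG`-module structure on the coinduced module `Hom_B(KG, K)`. -/
noncomputable instance : Module (MonoidAlgebra K G) (CoInd K G p hp α) :=
  Module.compHom _ (coindHom K G p hp α)

end

section
variable (k K G : Type) [Field k] [Field K] [Algebra k K] [Group G] (p : ℕ) (hp : p ≠ 0)
  (α : Bp K p →ₐ[K] MonoidAlgebra K G)

/-- The canonical ring homomorphism `kG → KG`. -/
noncomputable def kGMap : MonoidAlgebra k G →+* MonoidAlgebra K G :=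
  MonoidAlgebra.liftNCRingHom (algebraMap k (MonoidAlgebra K G)) (MonoidAlgebra.of K G)
    (fun x y => Algebra.commutes x _)

/-- The point module `Δ_G(α)`: the coinduced module `Hom_B(KG, K)` viewed as a
`kG`-module by restriction along `kG → KG`. -/
noncomputable instance deltaModule : Module (MonoidAlgebra k G) (CoInd K G p hp α) :=
  Module.compHom _ (kGMap k K G)

end

section
variable (k K G : Type) [Field k] [Field K] [Algebra k K] [Group G] (p : ℕ) (hp : p ≠ 0)
  (α : Bp K p →ₐ[K] MonoidAlgebra K G)

/-- Scalars of `B` act by `kG`-linear endomorphisms. -/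
noncomputable def scalB : Bp K p →+* Module.End (MonoidAlgebra k G) (CoInd K G p hp α) where
  toFun b :=
    { toFun := fun f => b • f
      map_add' := fun f g => smul_add b f g
      map_smul' := fun x f =>
        ((coindHom K G p hp α (kGMap k K G x)).map_smul b f).symm }
  map_one' := LinearMap.ext fun f => one_smul _ f
  map_mul' a b := LinearMap.ext fun f => mul_smul a b f
  map_zero' := LinearMap.ext fun f => zero_smul _ f
  map_add' a b := LinearMap.ext fun f => add_smul a b f

/-- The `K`-structure. -/
noncomputable abbrev modK : Module K (CoInd K G p hp α) :=
  Module.compHom _ (algebraMap K (Bp K p))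

/-- Evaluation. -/
noncomputable def evC (f : CoInd K G p hp α) (y : MonoidAlgebra K G) : K :=
  letI : Module (Bp K p) (MonoidAlgebra K G) := Module.compHom _ α.toRingHom
  letI : Module (Bp K p) K := Module.compHom K (resB K p hp).toRingHom
  (show MonoidAlgebra K G →ₗ[Bp K p] K from f) y

theorem evC_add (f : CoInd K G p hp α) (x y : MonoidAlgebra K G) :
    evC K G p hp α f (x + y) = evC K G p hp α f x + evC K G p hp α f y :=
  letI : Module (Bp K p) (MonoidAlgebra K G) := Module.compHom _ α.toRingHom
  letI : Module (Bp K p) K := Module.compHom K (resB K p hp).toRingHom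
  LinearMap.map_add (show MonoidAlgebra K G →ₗ[Bp K p] K from f) x y

theorem evC_smul (f : CoInd K G p hp α) (c : K) (y : MonoidAlgebra K G) :
    evC K G p hp α f (c • y) = c * evC K G p hp α f y := by
  letI : Module (Bp K p) (MonoidAlgebra K G) := Module.compHom _ α.toRingHom
  letI : Module (Bp K p) K := Module.compHom K (resB K p hp).toRingHom
  have h : evC K G p hp α f (α (algebraMap K (Bp K p) c) * y)
      = resB K p hp (algebraMap K (Bp K p) c) * evC K G p hp α f y :=
    LinearMap.map_smul (show MonoidAlgebra K G →ₗ[Bp K p] K from f)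
      (algebraMap K (Bp K p) c) y
  rw [AlgHom.commutes, AlgHom.commutes, ← Algebra.smul_def] at h
  exact h

theorem evC_ext (f g : CoInd K G p hp α)
    (h : ∀ x : G, evC K G p hp α f (MonoidAlgebra.single x 1) =
      evC K G p hp α g (MonoidAlgebra.single x 1)) : f = g := by
  letI : Module (Bp K p) (MonoidAlgebra K G) := Module.compHom _ α.toRingHom
  letI : Module (Bp K p) K := Module.compHom K (resB K p hp).toRingHom
  refine LinearMap.ext (f := (show MonoidAlgebra K G →ₗ[Bp K p] K from f)) fun y => ?_
  change evC K G p hp α f y = evC K G p hp α g y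
  induction y using MonoidAlgebra.induction_on with
  | of x => exact h x
  | add a b ha hb => rw [evC_add, evC_add, ha, hb]
  | smul r a ha => rw [evC_smul, evC_smul, ha]

theorem finK [Finite G] :
    letI := modK K G p hp α
    Module.Finite K (CoInd K G p hp α) := by
  letI := modK K G p hp α
  let φ : CoInd K G p hp α →ₗ[K] (G → K) :=
    { toFun := fun f x => evC K G p hp α f (MonoidAlgebra.single x 1)
      map_add' := fun f g => rfl
      map_smul' := fun c f => by
        funext x
        change resB K p hp (algebraMap K (Bp K p) c) * _ = c * _
        rw [AlgHom.commutes]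
        rfl }
  exact Module.Finite.of_injective φ fun f g h =>
    evC_ext K G p hp α f g fun x => congrFun h x

end

/-- For a π-point `α` (a flat `K`-algebra map `K[t]/(t^p) → KG`), the point
module `Δ_G(α) = Hom_B(KG, K)`, viewed as a `kG`-module, is endofinite. -/
theorem statement15 (k K G : Type) [Field k] [Field K] [Algebra k K] [Group G] [Finite G]
    (p : ℕ) [CharP k p] (hp : 0 < p)
    (α : Bp K p →ₐ[K] MonoidAlgebra K G)
    (hflat : letI : Module (Bp K p) (MonoidAlgebra K G) := Module.compHom _ α.toRingHom
      Module.Flat (Bp K p) (MonoidAlgebra K G)) :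
    IsFiniteLength
      (Module.End (MonoidAlgebra k G) (CoInd K G p hp.ne' α))
      (CoInd K G p hp.ne' α) := by
  letI := modK K G p hp.ne' α
  haveI : Module.Finite K (CoInd K G p hp.ne' α) := finK K G p hp.ne' α
  let F : Submodule (Module.End (MonoidAlgebra k G) (CoInd K G p hp.ne' α))
      (CoInd K G p hp.ne' α) → Submodule K (CoInd K G p hp.ne' α) := fun N =>
    { carrier := N
      add_mem' := fun ha hb => N.add_mem ha hb
      zero_mem' := N.zero_mem
      smul_mem' := fun c _ hx =>
        N.smul_mem (scalB k K G p hp.ne' α (algebraMap K (Bp K p) c)) hx }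
  have hF : StrictMono F := fun _ _ h => h
  rw [isFiniteLength_iff_isNoetherian_isArtinian]
  have hn : IsNoetherian K (CoInd K G p hp.ne' α) := inferInstance
  have ha : IsArtinian K (CoInd K G p hp.ne' α) := inferInstance
  refine ⟨isNoetherian_iff'.2 ?_, ?_⟩
  · have := isNoetherian_iff'.1 hn
    exact hF.wellFoundedGT
  · have : WellFoundedLT (Submodule K (CoInd K G p hp.ne' α)) := ha
    exact hF.wellFoundedLT
end
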